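/- arXiv:2109.13888 — 2 statements merged into one kernel-verified Lean document; each statement's English description precedes it below -/
import Mathlib

section
/- Let σ ∈ S₅ be the permutation with σ(1)=4, σ(2)=5, σ(3)=1, σ(4)=3, σ(5)=2 (complete notation [45132]). The set BL_σ ⊂ Lo¹₅ has exactly 40 connected components, and every connected component of BL_σ is contractible. -/
open Matrix

/-- The group `Lo¹_m` of real lower triangular `m × m` matrices with
all diagonal entries equal to `1`, viewed as a subset of the matrix space. -/
def Lo1 (m : ℕ) : Set (Matrix (Fin m) (Fin m) ℝ) :=
  {L | (∀ i, L i i = 1) ∧ ∀ i j : Fin m, i < j → L i j = 0}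

/-- The set of invertible real upper triangular `m × m` matrices. -/
def UpInv (m : ℕ) : Set (Matrix (Fin m) (Fin m) ℝ) :=
  {U | (∀ i j : Fin m, j < i → U i j = 0) ∧ IsUnit U.det}

/-- The permutation matrix of `σ`, with `(P_σ)_{i, σ(i)} = 1` and `0` otherwise. -/
def permMat (m : ℕ) (σ : Equiv.Perm (Fin m)) : Matrix (Fin m) (Fin m) ℝ :=
  fun i j => if σ i = j then 1 else 0

/-- The Bruhat cell `Bru_σ^GL = { U₀ P_σ U₁ : U₀, U₁ upper triangular invertible }`. -/
def Bru (m : ℕ) (σ : Equiv.Perm (Fin m)) : Set (Matrix (Fin m) (Fin m) ℝ) :=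
  {M | ∃ U₀ ∈ UpInv m, ∃ U₁ ∈ UpInv m, M = U₀ * permMat m σ * U₁}

/-- `BL_σ = Lo¹ ∩ Bru_σ^GL`. -/
def BL (m : ℕ) (σ : Equiv.Perm (Fin m)) : Set (Matrix (Fin m) (Fin m) ℝ) :=
  Lo1 m ∩ Bru m σ

/-- The permutation `[45132] ∈ S₅` (in `1`-indexed complete notation), i.e.
`σ(1)=4, σ(2)=5, σ(3)=1, σ(4)=3, σ(5)=2`, written `0`-indexed on `Fin 5`. -/
def σ45132 : Equiv.Perm (Fin 5) :=
  ⟨![3, 4, 0, 2, 1], ![2, 4, 3, 0, 1], by decide, by decide⟩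

namespace BLproof

abbrev E7 : Type := ℝ × ℝ × ℝ × ℝ × ℝ × ℝ × ℝ

lemma contr_step {E : Type*} [AddCommGroup E] [Module ℝ E] [TopologicalSpace E]
    [ContinuousAdd E] [ContinuousSMul ℝ E] (S T : Set E) (f : E → E)
    (hf : ContinuousOn f S) (hT : T ⊆ S) (hmap : ∀ p ∈ S, f p ∈ T)
    (hseg : ∀ p ∈ S, ∀ s : ℝ, 0 ≤ s → s ≤ 1 → (1 - s) • p + s • f p ∈ S)
    (hTc : ContractibleSpace T) : ContractibleSpace S := by
  rw [contractible_iff_id_nullhomotopic]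
  let f' : C(S, T) := ⟨fun p => ⟨f p, hmap p p.2⟩, by
    exact Continuous.subtype_mk (continuousOn_iff_continuous_domRestrict.mp hf) _⟩
  let i : C(T, S) := ⟨fun p => ⟨p, hT p.2⟩, by fun_prop⟩
  have h1 : ContinuousMap.Homotopic (ContinuousMap.id S) (i.comp f') := by
    have hc : Continuous (fun p : S => f p) := continuousOn_iff_continuous_domRestrict.mp hf
    refine ⟨⟨⟨fun q => ⟨(1 - (q.1 : ℝ)) • (q.2 : E) + (q.1 : ℝ) • f q.2,
      hseg _ q.2.2 _ q.1.2.1 q.1.2.2⟩, ?_⟩, ?_, ?_⟩⟩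
    · refine Continuous.subtype_mk ?_ _
      have : Continuous (fun q : unitInterval × S => f q.2) := hc.comp continuous_snd
      have h2 : Continuous (fun q : unitInterval × S => (q.2 : E)) :=
        continuous_subtype_val.comp continuous_snd
      have h3 : Continuous (fun q : unitInterval × S => (q.1 : ℝ)) :=
        continuous_subtype_val.comp continuous_fst
      exact ((continuous_const.sub h3).smul h2).add (h3.smul this)
    · intro x; ext1; simp
    · intro x; ext1
      change (1 - (1 : ℝ)) • (x : E) + (1 : ℝ) • f x = f x
      simp
  obtain ⟨y, hy⟩ := (contractible_iff_id_nullhomotopic T).mp hTc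
  refine ⟨i y, h1.trans ?_⟩
  have h2 : ContinuousMap.Homotopic (i.comp ((ContinuousMap.id T).comp f'))
      (i.comp ((ContinuousMap.const T y).comp f')) :=
    ContinuousMap.Homotopic.comp (ContinuousMap.Homotopic.refl i)
      (ContinuousMap.Homotopic.comp hy (ContinuousMap.Homotopic.refl f'))
  exact h2

lemma comps {X I : Type*} [TopologicalSpace X] [Finite I] (R : I → Set X)
    (ho : ∀ i, IsOpen (R i)) (hd : ∀ i j x, x ∈ R i → x ∈ R j → i = j)
    (hcov : ∀ x, ∃ i, x ∈ R i) (hc : ∀ i, ContractibleSpace (R i)) :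
    Nat.card (ConnectedComponents X) = Nat.card I ∧
      ∀ x : X, ContractibleSpace (connectedComponent x) := by
  have hclopen : ∀ i, IsClopen (R i) := by
    intro i
    refine ⟨⟨?_⟩, ho i⟩
    have : (R i)ᶜ = ⋃ j : {j // j ≠ i}, R j := by
      ext x
      simp only [Set.mem_compl_iff, Set.mem_iUnion]
      constructor
      · intro h
        obtain ⟨j, hj⟩ := hcov x
        exact ⟨⟨j, fun e => h (e ▸ hj)⟩, hj⟩
      · rintro ⟨j, hj⟩ h
        exact j.2 (hd _ _ _ hj h)
    rw [this]
    exact isOpen_iUnion fun j => ho j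
  have hcomp : ∀ i x, x ∈ R i → connectedComponent x = R i := by
    intro i x hx
    apply Set.Subset.antisymm
    · exact (hclopen i).connectedComponent_subset hx
    · have : PreconnectedSpace (R i) := inferInstance
      exact (isPreconnected_iff_preconnectedSpace.mpr this).subset_connectedComponent hx
  refine ⟨?_, ?_⟩
  · have hne : ∀ i, ∃ x, x ∈ R i := fun i => by
      have : Nonempty (R i) := inferInstance
      exact ⟨this.some, this.some.2⟩
    choose g hg using hne
    symm
    apply Nat.card_congr
    refine Equiv.ofBijective (fun i => ConnectedComponents.mk (g i)) ⟨?_, ?_⟩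
    · intro i j h
      have h' := ConnectedComponents.coe_eq_coe.mp h
      rw [hcomp _ _ (hg i), hcomp _ _ (hg j)] at h'
      exact hd i j (g i) (hg i) (h' ▸ hg i)
    · intro c
      obtain ⟨x, rfl⟩ := ConnectedComponents.surjective_coe c
      obtain ⟨i, hi⟩ := hcov x
      refine ⟨i, ConnectedComponents.coe_eq_coe.mpr ?_⟩
      rw [hcomp _ _ (hg i), hcomp _ _ hi]
  · intro x
    obtain ⟨i, hi⟩ := hcov x
    rw [hcomp _ _ hi]
    exact hc i

/-- common conditions: `b > 0`, `u > 0`, `w > 0`. -/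
def SA : Set E7 := {p | match p with
  | (b, x, y, d, e, c, h) => 0 < b ∧ y < x * c ∧ y < d * h ∧ e * y < d * x ∧ (y < 0 ∨ 0 < d * x)}
def SB : Set E7 := {p | match p with
  | (b, x, y, d, e, c, h) => 0 < b ∧ y < x * c ∧ d * h < y ∧ e * y < d * x ∧
      (y < 0 ∨ 0 < x) ∧ (0 < y ∨ 0 < d)}
def SB' : Set E7 := {p | match p with
  | (b, x, y, d, e, c, h) => 0 < b ∧ y < x * c ∧ d * h < y ∧ e * y < d * x ∧
      (y < 0 ∨ x < 0) ∧ (0 < y ∨ d < 0)}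
def SC : Set E7 := {p | match p with
  | (b, x, y, d, e, c, h) => 0 < b ∧ y < x * c ∧ y < d * h ∧ e * y < d * x ∧ 0 < y ∧ 0 < x ∧ d < 0}
def SC' : Set E7 := {p | match p with
  | (b, x, y, d, e, c, h) => 0 < b ∧ y < x * c ∧ y < d * h ∧ e * y < d * x ∧ 0 < y ∧ x < 0 ∧ 0 < d}

lemma cself (s x : ℝ) : (1 - s) * x + s * x = x := by ring

lemma lin {s A B : ℝ} (h0 : 0 ≤ s) (h1 : s ≤ 1) (hA : 0 < A) (hB : 0 < B) :
    0 < (1 - s) * A + s * B := by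
  rcases h0.eq_or_lt with rfl | h
  · simpa using hA
  · have := mul_pos h hB
    have := mul_nonneg (sub_nonneg.mpr h1) hA.le
    linarith

lemma linle {s A B : ℝ} (h0 : 0 ≤ s) (h1 : s ≤ 1) (hA : 0 ≤ A) (hB : 0 ≤ B) :
    0 ≤ (1 - s) * A + s * B :=
  add_nonneg (mul_nonneg (by linarith) hA) (mul_nonneg h0 hB)

lemma contrSA : ContractibleSpace SA := by
  refine contr_step SA (SA ∩ {p | 0 ≤ p.2.2.2.2.1 ∧ True})
    (fun p => (p.1, p.2.1, p.2.2.1, p.2.2.2.1, max p.2.2.2.2.1 0, p.2.2.2.2.2))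
    (by fun_prop) Set.inter_subset_left ?_ ?_ ?_
  · rintro ⟨b, x, y, d, e, c, h⟩ ⟨hb, hu, hv, hw, hy⟩
    refine ⟨⟨hb, hu, hv, ?_, hy⟩, le_max_right _ _, trivial⟩
    rcases max_cases e 0 with ⟨h1, h2⟩ | ⟨h1, h2⟩
    · dsimp only; rw [h1]; exact hw
    · dsimp only; rw [h1]
      rcases hy with hy | hy
      · nlinarith
      · simpa using hy
  · rintro ⟨b, x, y, d, e, c, h⟩ ⟨hb, hu, hv, hw, hy⟩ s h0 h1
    simp only [Prod.smul_mk, Prod.mk_add_mk, smul_eq_mul, cself]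
    refine ⟨hb, hu, hv, ?_, hy⟩
    have : max e 0 * y < d * x := by
      rcases max_cases e 0 with ⟨h1, h2⟩ | ⟨h1, h2⟩
      · rw [h1]; exact hw
      · rw [h1]
        rcases hy with hy | hy
        · nlinarith
        · simpa using hy
    have := lin h0 h1 (sub_pos.mpr hw) (sub_pos.mpr this)
    nlinarith
  refine contr_step _ (SA ∩ {p | 0 ≤ p.2.2.2.2.1 ∧ p.2.2.1 ≤ -1})
    (fun p => (p.1, p.2.1, min p.2.2.1 (-1), p.2.2.2))
    (by fun_prop) (fun p hp => ⟨hp.1, hp.2.1, trivial⟩) ?_ ?_ ?_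
  · rintro ⟨b, x, y, d, e, c, h⟩ ⟨⟨hb, hu, hv, hw, hy⟩, he, _⟩
    dsimp only at he
    have h1 := min_le_left y (-1)
    have h2 := min_le_right y (-1)
    refine ⟨⟨hb, h1.trans_lt hu, h1.trans_lt hv, ?_, Or.inl ?_⟩, he, h2⟩
    · dsimp only; nlinarith
    · linarith
  · rintro ⟨b, x, y, d, e, c, h⟩ ⟨⟨hb, hu, hv, hw, hy⟩, he, _⟩ s h0 h1
    dsimp only at he
    simp only [Prod.smul_mk, Prod.mk_add_mk, smul_eq_mul, cself]
    have h2 : (1 - s) * y + s * min y (-1) ≤ y := by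
      nlinarith [min_le_left y (-1)]
    refine ⟨⟨hb, h2.trans_lt hu, h2.trans_lt hv, ?_, ?_⟩, ?_⟩
    · nlinarith
    · exact hy.imp (fun h => h2.trans_lt h) id
    · exact ⟨he, trivial⟩
  refine contr_step _ (SA ∩ {p | 1 ≤ p.2.2.2.2.1 ∧ p.2.2.1 ≤ -1})
    (fun p => (p.1, p.2.1, p.2.2.1, p.2.2.2.1, max p.2.2.2.2.1 1, p.2.2.2.2.2))
    (by fun_prop) (fun p hp => ⟨hp.1, zero_le_one.trans hp.2.1, hp.2.2⟩) ?_ ?_ ?_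
  · rintro ⟨b, x, y, d, e, c, h⟩ ⟨⟨hb, hu, hv, hw, hy⟩, he, hy1⟩
    dsimp only at he hy1
    refine ⟨⟨hb, hu, hv, ?_, hy⟩, le_max_right _ _, hy1⟩
    dsimp only
    nlinarith [le_max_left e 1]
  · rintro ⟨b, x, y, d, e, c, h⟩ ⟨⟨hb, hu, hv, hw, hy⟩, he, hy1⟩ s h0 h1
    dsimp only at he hy1
    simp only [Prod.smul_mk, Prod.mk_add_mk, smul_eq_mul, cself]
    have h2 : e ≤ (1 - s) * e + s * max e 1 := by
      nlinarith [le_max_left e 1]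
    refine ⟨⟨hb, hu, hv, ?_, hy⟩, ?_, ?_⟩
    · nlinarith
    · exact he.trans h2
    · exact hy1
  have hst : StarConvex ℝ ((1, 0, -1, 0, 1, 0, 0) : E7)
      (SA ∩ {p | 1 ≤ p.2.2.2.2.1 ∧ p.2.2.1 ≤ -1}) := by
    rintro ⟨b, x, y, d, e, c, h⟩ ⟨⟨hb, hu, hv, hw, hy⟩, he, hy1⟩ r s hr hs hrs
    obtain rfl : r = 1 - s := by linarith
    dsimp only at he hy1
    have hs1 : s ≤ 1 := by linarith
    simp only [Prod.smul_mk, Prod.mk_add_mk, smul_eq_mul, mul_zero, zero_add, mul_one]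
    have key : ∀ z : ℝ, y < z → (1 - s) * -1 + s * y < s * s * z := by
      intro z hz
      rcases hs.eq_or_lt with rfl | hs'
      · norm_num
      have a1 : s * s * y < s * s * z := mul_lt_mul_of_pos_left hz (by positivity)
      have a2 : s * y ≤ s * s * y := by nlinarith [mul_nonneg hs hr]
      linarith
    have hys : (1 - s) * -1 + s * y ≤ -1 := by nlinarith
    refine ⟨⟨?_, ?_, ?_, ?_, ?_⟩, ?_, ?_⟩
    · have := lin hs hs1 one_pos hb; linarith
    · have := key _ hu; linarith
    · have := key _ hv; linarith
    · have a1 : 0 < s → s * s * (e * y) < s * s * (d * x) :=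
        fun hs' => mul_lt_mul_of_pos_left hw (by positivity)
      have a2 : (1 - s + s * e) * ((1 - s) * -1 + s * y) ≤ s * s * (e * y) := by
        nlinarith [mul_nonneg hr hs, mul_nonneg hr hr, mul_nonneg (mul_nonneg hr hs) (show 0 ≤ e by linarith), mul_nonneg (mul_nonneg hr hs) (show 0 ≤ -y by linarith)]
      rcases hs.eq_or_lt with rfl | hs'
      · norm_num
      · have := a1 hs'; linarith
    · left; linarith
    · dsimp only; nlinarith
    · exact hys
  exact hst.contractibleSpace ⟨(1, 0, -1, 0, 1, 0, 0), by norm_num [SA]⟩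

lemma contrSB : ContractibleSpace SB := by
  refine contr_step SB (SB ∩ {p | 0 ≤ p.2.2.2.2.2.1 ∧ p.2.2.2.2.2.2 ≤ 0})
    (fun p => (p.1, p.2.1, p.2.2.1, p.2.2.2.1, p.2.2.2.2.1, max p.2.2.2.2.2.1 0,
      min p.2.2.2.2.2.2 0))
    (by fun_prop) Set.inter_subset_left ?_ ?_ ?_
  · rintro ⟨b, x, y, d, e, c, h⟩ ⟨hb, hu, hv, hw, hx, hd⟩
    refine ⟨⟨hb, ?_, ?_, hw, hx, hd⟩, le_max_right _ _, min_le_right _ _⟩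
    · dsimp only
      rcases max_cases c 0 with ⟨h1, h2⟩ | ⟨h1, h2⟩ <;> rw [h1]
      · exact hu
      · rcases hx with hx | hx <;> nlinarith
    · dsimp only
      rcases min_cases h 0 with ⟨h1, h2⟩ | ⟨h1, h2⟩ <;> rw [h1]
      · exact hv
      · rcases hd with hx | hx <;> nlinarith
  · rintro ⟨b, x, y, d, e, c, h⟩ ⟨hb, hu, hv, hw, hx, hd⟩ s h0 h1
    simp only [Prod.smul_mk, Prod.mk_add_mk, smul_eq_mul, cself]
    refine ⟨hb, ?_, ?_, hw, hx, hd⟩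
    · have : y < x * max c 0 := by
        rcases max_cases c 0 with ⟨h1, h2⟩ | ⟨h1, h2⟩ <;> rw [h1]
        · exact hu
        · rcases hx with hx | hx <;> nlinarith
      have := lin h0 h1 (sub_pos.mpr hu) (sub_pos.mpr this)
      nlinarith
    · have : d * min h 0 < y := by
        rcases min_cases h 0 with ⟨h1, h2⟩ | ⟨h1, h2⟩ <;> rw [h1]
        · exact hv
        · rcases hd with hx | hx <;> nlinarith
      have := lin h0 h1 (sub_pos.mpr hv) (sub_pos.mpr this)
      nlinarith
  refine contr_step _ (SB ∩ {p | (0 ≤ p.2.2.2.2.2.1 ∧ p.2.2.2.2.2.2 ≤ 0) ∧ 0 < p.2.1 ∧ 0 < p.2.2.2.1})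
    (fun p => (p.1, max p.2.1 (-p.2.2.1), p.2.2.1, max p.2.2.2.1 p.2.2.1, p.2.2.2.2))
    (by fun_prop) (fun p hp => ⟨hp.1, hp.2.1⟩) ?_ ?_ ?_
  · rintro ⟨b, x, y, d, e, c, h⟩ ⟨⟨hb, hu, hv, hw, hx, hd⟩, hc, hh⟩
    dsimp only at hc hh
    have hX : 0 < max x (-y) := by
      rcases hx with hx | hx
      · exact lt_max_of_lt_right (by linarith)
      · exact lt_max_of_lt_left hx
    have hD : 0 < max d y := by
      rcases hd with hx | hx
      · exact lt_max_of_lt_right (by linarith)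
      · exact lt_max_of_lt_left hx
    have hX' := le_max_left x (-y)
    have hD' := le_max_left d y
    refine ⟨⟨hb, ?_, ?_, ?_, Or.inr hX, Or.inr hD⟩, ⟨hc, hh⟩, hX, hD⟩
    · dsimp only; nlinarith
    · dsimp only; nlinarith
    · dsimp only
      rcases le_or_gt y 0 with hy | hy
      · have hd0 : 0 < d := hd.resolve_left (by linarith)
        rw [max_eq_left (by linarith : y ≤ d)]; nlinarith
      · have hx0 : 0 < x := hx.resolve_left (by linarith)
        rw [max_eq_left (by linarith : -y ≤ x)]; nlinarith
  · rintro ⟨b, x, y, d, e, c, h⟩ ⟨⟨hb, hu, hv, hw, hx, hd⟩, hc, hh⟩ s h0 h1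
    dsimp only at hc hh
    simp only [Prod.smul_mk, Prod.mk_add_mk, smul_eq_mul, cself]
    have hX' : x ≤ (1 - s) * x + s * max x (-y) := by
      nlinarith [le_max_left x (-y)]
    have hD' : d ≤ (1 - s) * d + s * max d y := by
      nlinarith [le_max_left d y]
    refine ⟨⟨hb, ?_, ?_, ?_, ?_, ?_⟩, ?_⟩
    · nlinarith
    · nlinarith
    · rcases le_or_gt y 0 with hy | hy
      · have hd0 : 0 < d := hd.resolve_left (by linarith)
        rw [max_eq_left (by linarith : y ≤ d), cself]; nlinarith
      · have hx0 : 0 < x := hx.resolve_left (by linarith)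
        rw [max_eq_left (by linarith : -y ≤ x), cself]; nlinarith
    · exact hx.imp id (fun h => h.trans_le hX')
    · exact hd.imp id (fun h => h.trans_le hD')
    · exact ⟨hc, hh⟩
  refine contr_step _ (SB ∩ {p | (0 < p.2.2.2.2.2.1 ∧ p.2.2.2.2.2.2 < 0) ∧ 0 < p.2.1 ∧ 0 < p.2.2.2.1})
    (fun p => (p.1, p.2.1, p.2.2.1, p.2.2.2.1, p.2.2.2.2.1, p.2.2.2.2.2.1 + 1,
      p.2.2.2.2.2.2 - 1))
    (by fun_prop) (fun p hp => ⟨hp.1, ⟨hp.2.1.1.le, hp.2.1.2.le⟩, hp.2.2⟩) ?_ ?_ ?_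
  · rintro ⟨b, x, y, d, e, c, h⟩ ⟨⟨hb, hu, hv, hw, hx, hd⟩, ⟨hc, hh⟩, hx0, hd0⟩
    dsimp only at hc hh hx0 hd0
    refine ⟨⟨hb, ?_, ?_, hw, hx, hd⟩, ⟨?_, ?_⟩, hx0, hd0⟩ <;> (try dsimp only) <;> nlinarith
  · rintro ⟨b, x, y, d, e, c, h⟩ ⟨⟨hb, hu, hv, hw, hx, hd⟩, ⟨hc, hh⟩, hx0, hd0⟩ s h0 h1
    dsimp only at hc hh hx0 hd0
    simp only [Prod.smul_mk, Prod.mk_add_mk, smul_eq_mul, cself]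
    refine ⟨⟨hb, ?_, ?_, hw, hx, hd⟩, ⟨?_, ?_⟩, ?_, ?_⟩ <;> (try dsimp only) <;>
      nlinarith [mul_nonneg h0 hx0.le, mul_nonneg h0 hd0.le]
  refine contr_step _ {p : E7 | 0 < p.1 ∧ 0 < p.2.1 ∧ p.2.2.1 = 0 ∧ 0 < p.2.2.2.1 ∧ p.2.2.2.2.1 = 0 ∧
      0 < p.2.2.2.2.2.1 ∧ p.2.2.2.2.2.2 < 0}
    (fun p => (p.1, p.2.1, 0, p.2.2.2.1, 0, p.2.2.2.2.2))
    (by fun_prop) ?_ ?_ ?_ ?_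
  · rintro ⟨b, x, y, d, e, c, h⟩ ⟨hb, hx, hy, hd, he, hc, hh⟩
    dsimp only at hb hx hy hd he hc hh
    subst hy he
    refine ⟨⟨hb, ?_, ?_, ?_, Or.inr hx, Or.inr hd⟩, ⟨hc, hh⟩, hx, hd⟩ <;> (try dsimp only) <;> nlinarith
  · rintro ⟨b, x, y, d, e, c, h⟩ ⟨⟨hb, hu, hv, hw, hx, hd⟩, ⟨hc, hh⟩, hx0, hd0⟩
    exact ⟨hb, hx0, rfl, hd0, rfl, hc, hh⟩
  · rintro ⟨b, x, y, d, e, c, h⟩ ⟨⟨hb, hu, hv, hw, hx, hd⟩, ⟨hc, hh⟩, hx0, hd0⟩ s h0 h1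
    dsimp only at hc hh hx0 hd0
    simp only [Prod.smul_mk, Prod.mk_add_mk, smul_eq_mul, cself, mul_zero, add_zero]
    have hxc := mul_pos hx0 hc
    have hdh := mul_pos hd0 (neg_pos.mpr hh)
    have hdx := mul_pos hd0 hx0
    refine ⟨⟨hb, ?_, ?_, ?_, Or.inr hx0, Or.inr hd0⟩, ⟨?_, ?_⟩, ?_, ?_⟩
    · have := lin h0 h1 (sub_pos.mpr hu) hxc; nlinarith
    · have := lin h0 h1 (sub_pos.mpr hv) hdh; nlinarith
    · have := lin (s := 1 - (1 - s) * (1 - s)) (by nlinarith) (by nlinarith) (sub_pos.mpr hw) hdx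
      nlinarith
    all_goals assumption
  · refine Convex.contractibleSpace ?_ ⟨(1, 1, 0, 1, 0, 1, -1), by norm_num⟩
    rintro ⟨b, x, y, d, e, c, h⟩ ⟨hb, hx, hy, hd, he, hc, hh⟩ ⟨b', x', y', d', e', c', h'⟩
      ⟨hb', hx', hy', hd', he', hc', hh'⟩ r s hr hs hrs
    obtain rfl : r = 1 - s := by linarith
    have hs1 : s ≤ 1 := by linarith
    dsimp only at hb hx hy hd he hc hh hb' hx' hy' hd' he' hc' hh'
    subst hy hy' he he'
    simp only [Prod.smul_mk, Prod.mk_add_mk, smul_eq_mul, mul_zero, add_zero]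
    refine ⟨lin hs hs1 hb hb', lin hs hs1 hx hx', rfl, lin hs hs1 hd hd', rfl, lin hs hs1 hc hc', ?_⟩
    have := lin hs hs1 (neg_pos.mpr hh) (neg_pos.mpr hh')
    dsimp only
    linarith

def TC : Set E7 := {p | match p with
  | (b, x, y, d, e, c, h) => 0 < b ∧ 0 < x ∧ 0 < y ∧ d < 0 ∧ 0 < e ∧ 0 < c ∧ 0 < h}

lemma contrSC : ContractibleSpace SC := by
  have hT : ContractibleSpace TC := by
    refine Convex.contractibleSpace ?_ ⟨(1, 1, 1, -1, 1, 1, 1), by norm_num [TC]⟩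
    rintro ⟨b, x, y, d, e, c, h⟩ ⟨hb, hx, hy, hd, he, hc, hh⟩ ⟨b', x', y', d', e', c', h'⟩
      ⟨hb', hx', hy', hd', he', hc', hh'⟩ r s hr hs hrs
    obtain rfl : r = 1 - s := by linarith
    have hs1 : s ≤ 1 := by linarith
    simp only [Prod.smul_mk, Prod.mk_add_mk, smul_eq_mul]
    refine ⟨lin hs hs1 hb hb', lin hs hs1 hx hx', lin hs hs1 hy hy', ?_, lin hs hs1 he he',
      lin hs hs1 hc hc', lin hs hs1 hh hh'⟩
    have := lin hs hs1 (neg_pos.mpr hd) (neg_pos.mpr hd')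
    linarith
  let F : E7 → E7 := fun p => (p.1, p.2.1, p.2.2.1, p.2.2.2.1,
    p.2.2.2.1 * p.2.1 - p.2.2.2.2.1 * p.2.2.1, p.2.1 * p.2.2.2.2.2.1 - p.2.2.1,
    p.2.2.2.1 * p.2.2.2.2.2.2 - p.2.2.1)
  let G : E7 → E7 := fun p => (p.1, p.2.1, p.2.2.1, p.2.2.2.1,
    (p.2.2.2.1 * p.2.1 - p.2.2.2.2.1) / p.2.2.1, (p.2.2.2.2.2.1 + p.2.2.1) / p.2.1,
    (p.2.2.2.2.2.2 + p.2.2.1) / p.2.2.2.1)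
  have hGne : ∀ p ∈ TC, p.2.1 ≠ 0 ∧ p.2.2.1 ≠ 0 ∧ p.2.2.2.1 ≠ 0 := by
    rintro ⟨b, x, y, d, e, c, h⟩ ⟨hb, hx, hy, hd, he, hc, hh⟩
    exact ⟨hx.ne', hy.ne', hd.ne⟩
  have hF : ∀ p ∈ SC, F p ∈ TC := by
    rintro ⟨b, x, y, d, e, c, h⟩ ⟨hb, hu, hv, hw, hy, hx, hd⟩
    exact ⟨hb, hx, hy, hd, sub_pos.mpr hw, sub_pos.mpr hu, sub_pos.mpr hv⟩
  have hG : ∀ p ∈ TC, G p ∈ SC := by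
    rintro ⟨b, x, y, d, e, c, h⟩ ⟨hb, hx, hy, hd, he, hc, hh⟩
    refine ⟨hb, ?_, ?_, ?_, hy, hx, hd⟩
    · dsimp only; rw [mul_div_cancel₀ _ hx.ne']; linarith
    · dsimp only; rw [mul_div_cancel₀ _ hd.ne]; linarith
    · dsimp only; rw [div_mul_cancel₀ _ hy.ne']; linarith
  have hGc : ContinuousOn G TC := by
    have h1 : ∀ p ∈ TC, p.2.1 ≠ 0 := fun p hp => (hGne p hp).1
    have h2 : ∀ p ∈ TC, p.2.2.1 ≠ 0 := fun p hp => (hGne p hp).2.1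
    have h3 : ∀ p ∈ TC, p.2.2.2.1 ≠ 0 := fun p hp => (hGne p hp).2.2
    fun_prop (disch := assumption)
  have hFc : Continuous F := by fun_prop
  let Φ : SC ≃ₜ TC :=
    { toFun := fun p => ⟨F p, hF p p.2⟩
      invFun := fun p => ⟨G p, hG p p.2⟩
      left_inv := by
        rintro ⟨⟨b, x, y, d, e, c, h⟩, ⟨hb, hu, hv, hw, hy, hx, hd⟩⟩
        have := hx.ne'
        have := hy.ne'
        have := hd.ne
        apply Subtype.ext
        simp only [F, G, Prod.mk.injEq, true_and]
        refine ⟨?_, ?_, ?_⟩ <;> field_simp <;> ring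
      right_inv := by
        rintro ⟨⟨b, x, y, d, e, c, h⟩, ⟨hb, hx, hy, hd, he, hc, hh⟩⟩
        have := hx.ne'
        have := hy.ne'
        have := hd.ne
        apply Subtype.ext
        simp only [F, G, Prod.mk.injEq, true_and]
        refine ⟨?_, ?_, ?_⟩ <;> field_simp <;> ring
      continuous_toFun := by fun_prop
      continuous_invFun := by
        exact Continuous.subtype_mk (continuousOn_iff_continuous_domRestrict.mp hGc) _ }
  exact Φ.contractibleSpace


def sg (t : Bool) : ℝ := if t then 1 else -1

lemma sg_sq (t : Bool) : sg t * sg t = 1 := by cases t <;> simp [sg]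

lemma exists_sg {z : ℝ} (hz : z ≠ 0) : ∃ t, 0 < sg t * z := by
  rcases lt_or_gt_of_ne hz with h | h
  · exact ⟨false, by simpa [sg] using h⟩
  · exact ⟨true, by simpa [sg] using h⟩

lemma sg_unique {z : ℝ} {s t : Bool} (hs : 0 < sg s * z) (ht : 0 < sg t * z) : s = t := by
  cases s <;> cases t <;> simp [sg] at * <;> linarith

/-- Sign changes of the coordinates. -/
def flip (β η δ ξ : Bool) : E7 ≃ₜ E7 where
  toFun p := (sg β * p.1, sg ξ * p.2.1, sg η * p.2.2.1, sg δ * p.2.2.2.1,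
    sg δ * sg ξ * sg η * p.2.2.2.2.1, sg ξ * sg η * p.2.2.2.2.2.1, sg δ * sg η * p.2.2.2.2.2.2)
  invFun p := (sg β * p.1, sg ξ * p.2.1, sg η * p.2.2.1, sg δ * p.2.2.2.1,
    sg δ * sg ξ * sg η * p.2.2.2.2.1, sg ξ * sg η * p.2.2.2.2.2.1, sg δ * sg η * p.2.2.2.2.2.2)
  left_inv := by
    rintro ⟨b, x, y, d, e, c, h⟩
    cases β <;> cases η <;> cases δ <;> cases ξ <;> simp [sg]
  right_inv := by
    rintro ⟨b, x, y, d, e, c, h⟩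
    cases β <;> cases η <;> cases δ <;> cases ξ <;> simp [sg]
  continuous_toFun := by fun_prop
  continuous_invFun := by fun_prop

lemma contr_preimage (φ : E7 ≃ₜ E7) (A : Set E7) (hA : ContractibleSpace A) :
    ContractibleSpace (φ ⁻¹' A) :=
  (φ.subtype (p := fun x => x ∈ φ ⁻¹' A) (q := fun x => x ∈ A) (fun _ => Iff.rfl)).contractibleSpace

lemma SB'_eq : SB' = flip true true false false ⁻¹' SB := by
  ext ⟨b, x, y, d, e, c, h⟩
  simp [SB', SB, flip, sg]

lemma SC'_eq : SC' = flip true true false false ⁻¹' SC := by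
  ext ⟨b, x, y, d, e, c, h⟩
  simp [SC', SC, flip, sg]

def K : Fin 5 → Set E7 := ![SA, SB, SB', SC, SC']

lemma contrK (k : Fin 5) : ContractibleSpace (K k) := by
  fin_cases k
  · exact contrSA
  · exact contrSB
  · change ContractibleSpace SB'
    rw [SB'_eq]; exact contr_preimage _ _ contrSB
  · exact contrSC
  · change ContractibleSpace SC'
    rw [SC'_eq]; exact contr_preimage _ _ contrSC

lemma isOpen_or {X : Type*} [TopologicalSpace X] {p q : X → Prop} (hp : IsOpen {x | p x})
    (hq : IsOpen {x | q x}) : IsOpen {x | p x ∨ q x} := hp.union hq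

lemma openK (k : Fin 5) : IsOpen (K k) := by
  have hA : IsOpen SA := by
    have : SA = {p : E7 | 0 < p.1 ∧ p.2.2.1 < p.2.1 * p.2.2.2.2.2.1 ∧
      p.2.2.1 < p.2.2.2.1 * p.2.2.2.2.2.2 ∧ p.2.2.2.2.1 * p.2.2.1 < p.2.2.2.1 * p.2.1 ∧
      (p.2.2.1 < 0 ∨ 0 < p.2.2.2.1 * p.2.1)} := rfl
    rw [this]
    refine IsOpen.and ?_ (IsOpen.and ?_ (IsOpen.and ?_ (IsOpen.and ?_ (isOpen_or ?_ ?_)))) <;>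
      exact isOpen_lt (by fun_prop) (by fun_prop)
  have hB : IsOpen SB := by
    have : SB = {p : E7 | 0 < p.1 ∧ p.2.2.1 < p.2.1 * p.2.2.2.2.2.1 ∧
      p.2.2.2.1 * p.2.2.2.2.2.2 < p.2.2.1 ∧ p.2.2.2.2.1 * p.2.2.1 < p.2.2.2.1 * p.2.1 ∧
      (p.2.2.1 < 0 ∨ 0 < p.2.1) ∧ (0 < p.2.2.1 ∨ 0 < p.2.2.2.1)} := rfl
    rw [this]
    refine IsOpen.and ?_ (IsOpen.and ?_ (IsOpen.and ?_ (IsOpen.and ?_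
      (IsOpen.and (isOpen_or ?_ ?_) (isOpen_or ?_ ?_))))) <;>
      exact isOpen_lt (by fun_prop) (by fun_prop)
  have hC : IsOpen SC := by
    have : SC = {p : E7 | 0 < p.1 ∧ p.2.2.1 < p.2.1 * p.2.2.2.2.2.1 ∧
      p.2.2.1 < p.2.2.2.1 * p.2.2.2.2.2.2 ∧ p.2.2.2.2.1 * p.2.2.1 < p.2.2.2.1 * p.2.1 ∧
      0 < p.2.2.1 ∧ 0 < p.2.1 ∧ p.2.2.2.1 < 0} := rfl
    rw [this]
    refine IsOpen.and ?_ (IsOpen.and ?_ (IsOpen.and ?_ (IsOpen.and ?_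
      (IsOpen.and ?_ (IsOpen.and ?_ ?_))))) <;>
      exact isOpen_lt (by fun_prop) (by fun_prop)
  fin_cases k
  · exact hA
  · exact hB
  · change IsOpen SB'
    rw [SB'_eq]; exact hB.preimage (flip _ _ _ _).continuous
  · exact hC
  · change IsOpen SC'
    rw [SC'_eq]; exact hC.preimage (flip _ _ _ _).continuous

/-- The normalized region. -/
def Q : Set E7 := {p | match p with
  | (b, x, y, d, e, c, h) => 0 < b ∧ y < x * c ∧ e * y < d * x ∧ d * h ≠ y}

lemma K_sub (k : Fin 5) : K k ⊆ Q := by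
  fin_cases k
  · rintro ⟨b, x, y, d, e, c, h⟩ ⟨h1, h2, h3, h4, h5⟩; exact ⟨h1, h2, h4, h3.ne'⟩
  · rintro ⟨b, x, y, d, e, c, h⟩ ⟨h1, h2, h3, h4, h5⟩; exact ⟨h1, h2, h4, h3.ne⟩
  · rintro ⟨b, x, y, d, e, c, h⟩ ⟨h1, h2, h3, h4, h5⟩; exact ⟨h1, h2, h4, h3.ne⟩
  · rintro ⟨b, x, y, d, e, c, h⟩ ⟨h1, h2, h3, h4, h5⟩; exact ⟨h1, h2, h4, h3.ne'⟩
  · rintro ⟨b, x, y, d, e, c, h⟩ ⟨h1, h2, h3, h4, h5⟩; exact ⟨h1, h2, h4, h3.ne'⟩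

lemma Q_cov (p : E7) (hp : p ∈ Q) : ∃ k, p ∈ K k := by
  obtain ⟨b, x, y, d, e, c, h⟩ := p
  obtain ⟨hb, hu, hw, hv⟩ := hp
  rcases lt_or_gt_of_ne hv with hv | hv
  · by_cases hB : (y < 0 ∨ 0 < x) ∧ (0 < y ∨ 0 < d)
    · exact ⟨1, hb, hu, hv, hw, hB⟩
    · refine ⟨2, hb, hu, hv, hw, ?_⟩
      rcases lt_trichotomy y 0 with hy | hy | hy
      · refine ⟨Or.inl hy, Or.inr ?_⟩
        by_contra hd
        apply hB
        refine ⟨Or.inl hy, Or.inr (lt_of_le_of_ne (not_lt.mp hd) ?_)⟩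
        rintro rfl
        linarith
      · subst hy
        have hx : x ≠ 0 := by rintro rfl; simp at hu
        have hd : d ≠ 0 := by rintro rfl; simp at hv
        have hw' : 0 < d * x := by simpa using hw
        rcases lt_or_gt_of_ne hx with hx | hx
        · exact ⟨Or.inr hx, Or.inr (by nlinarith)⟩
        · exact absurd ⟨Or.inr hx, Or.inr (by nlinarith)⟩ hB
      · refine ⟨Or.inr ?_, Or.inl hy⟩
        by_contra hd
        apply hB
        refine ⟨Or.inr (lt_of_le_of_ne (not_lt.mp hd) ?_), Or.inl hy⟩
        rintro rfl
        linarith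
  · by_cases hA : y < 0 ∨ 0 < d * x
    · exact ⟨0, hb, hu, hv, hw, hA⟩
    · push Not at hA
      obtain ⟨hy, hdx⟩ := hA
      have hy : 0 < y := by
        rcases hy.eq_or_lt with rfl | hy
        · linarith
        · exact hy
      have hx : x ≠ 0 := by rintro rfl; linarith
      have hd : d ≠ 0 := by rintro rfl; linarith
      rcases lt_or_gt_of_ne hx with hx | hx
      · have : 0 < d := lt_of_le_of_ne (by nlinarith) hd.symm
        exact ⟨4, hb, hu, hv, hw, hy, hx, this⟩
      · have : d < 0 := lt_of_le_of_ne (by nlinarith) hd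
        exact ⟨3, hb, hu, hv, hw, hy, hx, this⟩

lemma K_disj (p : E7) (i j : Fin 5) (hi : p ∈ K i) (hj : p ∈ K j) : i = j := by
  obtain ⟨b, x, y, d, e, c, h⟩ := p
  have hAB : (b, x, y, d, e, c, h) ∈ SA → (b, x, y, d, e, c, h) ∈ SB → False := by
    rintro ⟨h1, h2, h3, h4, h5⟩ ⟨g1, g2, g3, g4, g5, g6⟩; linarith
  have hAB' : (b, x, y, d, e, c, h) ∈ SA → (b, x, y, d, e, c, h) ∈ SB' → False := by
    rintro ⟨h1, h2, h3, h4, h5⟩ ⟨g1, g2, g3, g4, g5, g6⟩; linarith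
  have hCB : (b, x, y, d, e, c, h) ∈ SC → (b, x, y, d, e, c, h) ∈ SB → False := by
    rintro ⟨h1, h2, h3, h4, h5⟩ ⟨g1, g2, g3, g4, g5, g6⟩; linarith
  have hCB' : (b, x, y, d, e, c, h) ∈ SC → (b, x, y, d, e, c, h) ∈ SB' → False := by
    rintro ⟨h1, h2, h3, h4, h5⟩ ⟨g1, g2, g3, g4, g5, g6⟩; linarith
  have hDB : (b, x, y, d, e, c, h) ∈ SC' → (b, x, y, d, e, c, h) ∈ SB → False := by
    rintro ⟨h1, h2, h3, h4, h5⟩ ⟨g1, g2, g3, g4, g5, g6⟩; linarith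
  have hDG : (b, x, y, d, e, c, h) ∈ SC' → (b, x, y, d, e, c, h) ∈ SB' → False := by
    rintro ⟨h1, h2, h3, h4, h5⟩ ⟨g1, g2, g3, g4, g5, g6⟩; linarith
  have hAC : (b, x, y, d, e, c, h) ∈ SA → (b, x, y, d, e, c, h) ∈ SC → False := by
    rintro ⟨h1, h2, h3, h4, h5⟩ ⟨g1, g2, g3, g4, g5, g6, g7⟩
    rcases h5 with h5 | h5
    · linarith
    · nlinarith
  have hAC' : (b, x, y, d, e, c, h) ∈ SA → (b, x, y, d, e, c, h) ∈ SC' → False := by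
    rintro ⟨h1, h2, h3, h4, h5⟩ ⟨g1, g2, g3, g4, g5, g6, g7⟩
    rcases h5 with h5 | h5
    · linarith
    · nlinarith
  have hCC' : (b, x, y, d, e, c, h) ∈ SC → (b, x, y, d, e, c, h) ∈ SC' → False := by
    rintro ⟨h1, h2, h3, h4, h5, h6, h7⟩ ⟨g1, g2, g3, g4, g5, g6, g7⟩; linarith
  have hBB' : (b, x, y, d, e, c, h) ∈ SB → (b, x, y, d, e, c, h) ∈ SB' → False := by
    rintro ⟨h1, h2, h3, h4, h5, h6⟩ ⟨g1, g2, g3, g4, g5, g6⟩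
    rcases h5 with h5 | h5 <;> rcases h6 with h6 | h6 <;> rcases g5 with g5 | g5 <;>
      rcases g6 with g6 | g6 <;> linarith
  generalize (b, x, y, d, e, c, h) = p at *
  have e0 : p ∈ K 0 → p ∈ SA := id
  have e1 : p ∈ K 1 → p ∈ SB := id
  have e2 : p ∈ K 2 → p ∈ SB' := id
  have e3 : p ∈ K 3 → p ∈ SC := id
  have e4 : p ∈ K 4 → p ∈ SC' := id
  match i, j, hi, hj with
  | 0, 0, _, _ => rfl
  | 1, 1, _, _ => rfl
  | 2, 2, _, _ => rfl
  | 3, 3, _, _ => rfl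
  | 4, 4, _, _ => rfl
  | 0, 1, hi, hj => exact (hAB (e0 hi) (e1 hj)).elim
  | 1, 0, hi, hj => exact (hAB (e0 hj) (e1 hi)).elim
  | 0, 2, hi, hj => exact (hAB' (e0 hi) (e2 hj)).elim
  | 2, 0, hi, hj => exact (hAB' (e0 hj) (e2 hi)).elim
  | 0, 3, hi, hj => exact (hAC (e0 hi) (e3 hj)).elim
  | 3, 0, hi, hj => exact (hAC (e0 hj) (e3 hi)).elim
  | 0, 4, hi, hj => exact (hAC' (e0 hi) (e4 hj)).elim
  | 4, 0, hi, hj => exact (hAC' (e0 hj) (e4 hi)).elim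
  | 1, 2, hi, hj => exact (hBB' (e1 hi) (e2 hj)).elim
  | 2, 1, hi, hj => exact (hBB' (e1 hj) (e2 hi)).elim
  | 3, 1, hi, hj => exact (hCB (e3 hi) (e1 hj)).elim
  | 1, 3, hi, hj => exact (hCB (e3 hj) (e1 hi)).elim
  | 3, 2, hi, hj => exact (hCB' (e3 hi) (e2 hj)).elim
  | 2, 3, hi, hj => exact (hCB' (e3 hj) (e2 hi)).elim
  | 4, 1, hi, hj => exact (hDB (e4 hi) (e1 hj)).elim
  | 1, 4, hi, hj => exact (hDB (e4 hj) (e1 hi)).elim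
  | 4, 2, hi, hj => exact (hDG (e4 hi) (e2 hj)).elim
  | 2, 4, hi, hj => exact (hDG (e4 hj) (e2 hi)).elim
  | 3, 4, hi, hj => exact (hCC' (e3 hi) (e4 hj)).elim
  | 4, 3, hi, hj => exact (hCC' (e3 hj) (e4 hi)).elim

/-- The parameter region. -/
def P : Set E7 := {p | match p with
  | (b, x, y, d, e, c, h) => b ≠ 0 ∧ x * c - y ≠ 0 ∧ d * h - y ≠ 0 ∧ d * x - e * y ≠ 0}

abbrev I40 : Type := Bool × Bool × Bool × Fin 5

def R (i : I40) : Set E7 := flip i.1 i.2.1 i.2.2.1 true ⁻¹' K i.2.2.2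

lemma R_sign (i : I40) (b x y d e c h : ℝ) (hp : flip i.1 i.2.1 i.2.2.1 true (b, x, y, d, e, c, h) ∈ Q) :
    0 < sg i.1 * b ∧ 0 < sg i.2.1 * (x * c - y) ∧ 0 < sg i.2.2.1 * (d * x - e * y) ∧ d * h - y ≠ 0 := by
  obtain ⟨β, η, δ, k⟩ := i
  obtain ⟨h1, h2, h3, h4⟩ := hp
  dsimp only at h1 h2 h3 h4 ⊢
  have hη := sg_sq η
  have hδ := sg_sq δ
  have s1 : sg true = 1 := by simp [sg]
  rw [s1] at h2 h3
  refine ⟨h1, by linarith, ?_, ?_⟩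
  · have : sg δ * (d * x - e * y) = sg δ * d * x - sg δ * (sg η * sg η) * e * y := by rw [hη]; ring
    rw [this]; linarith
  · intro h0
    apply h4
    have : sg δ * d * (sg δ * sg η * h) = (sg δ * sg δ) * sg η * (d * h) := by ring
    rw [this, hδ, sub_eq_zero.mp h0]; ring

lemma R_sub (i : I40) : R i ⊆ P := by
  rintro ⟨b, x, y, d, e, c, h⟩ hp
  obtain ⟨h1, h2, h3, h4⟩ := R_sign i b x y d e c h (K_sub _ hp)
  exact ⟨right_ne_zero_of_mul h1.ne', right_ne_zero_of_mul h2.ne', h4, right_ne_zero_of_mul h3.ne'⟩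

lemma R_disj (i j : I40) (p : E7) (hi : p ∈ R i) (hj : p ∈ R j) : i = j := by
  obtain ⟨b, x, y, d, e, c, h⟩ := p
  obtain ⟨h1, h2, h3, h4⟩ := R_sign i b x y d e c h (K_sub _ hi)
  obtain ⟨g1, g2, g3, g4⟩ := R_sign j b x y d e c h (K_sub _ hj)
  obtain ⟨β, η, δ, k⟩ := i
  obtain ⟨β', η', δ', k'⟩ := j
  obtain rfl : β = β' := sg_unique h1 g1
  obtain rfl : η = η' := sg_unique h2 g2
  obtain rfl : δ = δ' := sg_unique h3 g3
  obtain rfl : k = k' := K_disj _ _ _ hi hj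
  rfl

lemma R_cov (p : E7) (hp : p ∈ P) : ∃ i, p ∈ R i := by
  obtain ⟨b, x, y, d, e, c, h⟩ := p
  obtain ⟨hb, hu, hv, hw⟩ := hp
  obtain ⟨β, hβ⟩ := exists_sg hb
  obtain ⟨η, hη⟩ := exists_sg hu
  obtain ⟨δ, hδ⟩ := exists_sg hw
  have s1 : sg true = 1 := by simp [sg]
  have : flip β η δ true (b, x, y, d, e, c, h) ∈ Q := by
    have q1 := sg_sq η
    have q2 := sg_sq δ
    refine ⟨hβ, ?_, ?_, ?_⟩
    · change sg η * y < sg true * x * (sg true * sg η * c)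
      rw [s1]; linarith
    · change sg δ * sg true * sg η * e * (sg η * y) < sg δ * d * (sg true * x)
      rw [s1]
      have : sg δ * 1 * sg η * e * (sg η * y) = sg δ * (sg η * sg η) * e * y := by ring
      rw [this, q1]; linarith
    · change sg δ * d * (sg δ * sg η * h) ≠ sg η * y
      have : sg δ * d * (sg δ * sg η * h) = (sg δ * sg δ) * sg η * (d * h) := by ring
      rw [this, q2, one_mul]
      intro h0
      have hη0 : sg η ≠ 0 := left_ne_zero_of_mul hη.ne'
      exact hv (sub_eq_zero.mpr (mul_left_cancel₀ hη0 h0))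
  obtain ⟨k, hk⟩ := Q_cov _ this
  exact ⟨(β, η, δ, k), hk⟩

lemma R_open (i : I40) : IsOpen (R i) := (openK _).preimage (flip _ _ _ _).continuous

lemma R_contr (i : I40) : ContractibleSpace (R i) := contr_preimage _ _ (contrK _)

lemma main_P {X : Type*} [TopologicalSpace X] (Φ : X ≃ₜ P) :
    Nat.card (ConnectedComponents X) = 40 ∧
      ∀ x : X, ContractibleSpace (connectedComponent x) := by
  have := comps (X := X) (I := I40) (fun i => {x | (Φ x : E7) ∈ R i})
    (fun i => (R_open i).preimage (continuous_subtype_val.comp Φ.continuous))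
    (fun i j x hi hj => R_disj i j _ hi hj)
    (fun x => R_cov _ (Φ x).2) ?_
  · have hc : Nat.card I40 = 40 := by simp [I40]
    rwa [hc] at this
  · intro i
    have := R_contr i
    let Ψ : {x | (Φ x : E7) ∈ R i} ≃ₜ R i :=
      { toFun := fun x => ⟨Φ x, x.2⟩
        invFun := fun p => ⟨Φ.symm ⟨p, R_sub i p.2⟩, by
          simp only [Set.mem_ofPred_eq, Homeomorph.apply_symm_apply]; exact p.2⟩
        left_inv := by intro x; simp
        right_inv := by intro x; simp
        continuous_toFun := by fun_prop
        continuous_invFun := by fun_prop }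
    exact Ψ.contractibleSpace

lemma BL_cond (L : Matrix (Fin 5) (Fin 5) ℝ) (hL : L ∈ BL 5 σ45132) :
    L 3 0 = 0 ∧ L 4 0 = 0 ∧ L 2 0 ≠ 0 ∧ L 4 1 ≠ 0 ∧ L 3 2 * L 4 1 - L 3 1 * L 4 2 ≠ 0 ∧
    L 1 0 * (L 2 1 * (L 3 2 * L 4 3 - L 4 2) - (L 3 1 * L 4 3 - L 4 1)) =
      L 2 0 * (L 3 2 * L 4 3 - L 4 2) := by
  obtain ⟨⟨hd, hlo⟩, U, ⟨hU, hUd⟩, V, ⟨hV, hVd⟩, hM⟩ := hL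
  have hUt : U.BlockTriangular id := fun i j hij => hU i j hij
  have hVt : V.BlockTriangular id := fun i j hij => hV i j hij
  rw [Matrix.det_of_isUpperTriangular hUt] at hUd
  rw [Matrix.det_of_isUpperTriangular hVt] at hVd
  have hUn : ∀ i, U i i ≠ 0 := fun i => Finset.prod_ne_zero_iff.mp hUd.ne_zero i (Finset.mem_univ _)
  have hVn : ∀ i, V i i ≠ 0 := fun i => Finset.prod_ne_zero_iff.mp hVd.ne_zero i (Finset.mem_univ _)
  have hent : ∀ i j, L i j = U i 0 * V 3 j + U i 1 * V 4 j + U i 2 * V 0 j + U i 3 * V 2 j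
      + U i 4 * V 1 j := by
    intro i j
    rw [hM]
    simp [Matrix.mul_apply, permMat, Fin.sum_univ_five, σ45132]
    ring
  have u10 := hU 1 0 (by decide)
  have u20 := hU 2 0 (by decide)
  have u21 := hU 2 1 (by decide)
  have u30 := hU 3 0 (by decide)
  have u31 := hU 3 1 (by decide)
  have u32 := hU 3 2 (by decide)
  have u40 := hU 4 0 (by decide)
  have u41 := hU 4 1 (by decide)
  have u42 := hU 4 2 (by decide)
  have u43 := hU 4 3 (by decide)
  have v10 := hV 1 0 (by decide)
  have v20 := hV 2 0 (by decide)
  have v21 := hV 2 1 (by decide)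
  have v30 := hV 3 0 (by decide)
  have v31 := hV 3 1 (by decide)
  have v32 := hV 3 2 (by decide)
  have v40 := hV 4 0 (by decide)
  have v41 := hV 4 1 (by decide)
  have v42 := hV 4 2 (by decide)
  have v43 := hV 4 3 (by decide)
  have l11 := hd 1
  have l22 := hd 2
  have l33 := hd 3
  have l12 := hlo 1 2 (by decide)
  have l13 := hlo 1 3 (by decide)
  have l23 := hlo 2 3 (by decide)
  have h30 : L 3 0 = 0 := by rw [hent]; simp [*]
  have h40 : L 4 0 = 0 := by rw [hent]; simp [*]
  have h20 : L 2 0 = U 2 2 * V 0 0 := by rw [hent]; simp [*]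
  have h41 : L 4 1 = U 4 4 * V 1 1 := by rw [hent]; simp [*]
  refine ⟨h30, h40, ?_, ?_, ?_, ?_⟩
  · rw [h20]; exact mul_ne_zero (hUn _) (hVn _)
  · rw [h41]; exact mul_ne_zero (hUn _) (hVn _)
  · have : L 3 2 * L 4 1 - L 3 1 * L 4 2 = U 3 3 * V 2 2 * (U 4 4 * V 1 1) := by
      simp only [hent, u30, u31, u32, u40, u41, u42, u43, v21, v31, v32, v41, v42]; ring
    rw [this]
    exact mul_ne_zero (mul_ne_zero (hUn _) (hVn _)) (mul_ne_zero (hUn _) (hVn _))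
  · have : L 1 0 * (L 2 1 * (L 3 2 * L 4 3 - L 3 3 * L 4 2) - L 2 2 * (L 3 1 * L 4 3 - L 3 3 * L 4 1)
          + L 2 3 * (L 3 1 * L 4 2 - L 3 2 * L 4 1))
        - L 1 1 * (L 2 0 * (L 3 2 * L 4 3 - L 3 3 * L 4 2) - L 2 2 * (L 3 0 * L 4 3 - L 3 3 * L 4 0)
          + L 2 3 * (L 3 0 * L 4 2 - L 3 2 * L 4 0))
        + L 1 2 * (L 2 0 * (L 3 1 * L 4 3 - L 3 3 * L 4 1) - L 2 1 * (L 3 0 * L 4 3 - L 3 3 * L 4 0)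
          + L 2 3 * (L 3 0 * L 4 1 - L 3 1 * L 4 0))
        - L 1 3 * (L 2 0 * (L 3 1 * L 4 2 - L 3 2 * L 4 1) - L 2 1 * (L 3 0 * L 4 2 - L 3 2 * L 4 0)
          + L 2 2 * (L 3 0 * L 4 1 - L 3 1 * L 4 0)) = 0 := by
      simp only [hent, u10, u20, u21, u30, u31, u32, u40, u41, u42, u43, v10, v20, v21, v30, v31,
        v32, v40, v41, v42, v43]
      ring
    rw [l11, l22, l33, l12, l13, l23, h30, h40] at this
    linear_combination this

/-- The matrix with given parameters. -/
noncomputable def Mat (p : E7) : Matrix (Fin 5) (Fin 5) ℝ :=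
  !![1, 0, 0, 0, 0;
     p.1 * p.2.1 / (p.2.1 * p.2.2.2.2.2.1 - p.2.2.1), 1, 0, 0, 0;
     p.1, p.2.2.2.2.2.1, 1, 0, 0;
     0, p.2.2.2.1, p.2.2.2.2.1, 1, 0;
     0, p.2.2.2.1 * p.2.2.2.2.2.2 - p.2.2.1, p.2.2.2.2.1 * p.2.2.2.2.2.2 - p.2.1, p.2.2.2.2.2.2, 1]

/-- The parameters of a matrix. -/
def par (L : Matrix (Fin 5) (Fin 5) ℝ) : E7 :=
  (L 2 0, L 3 2 * L 4 3 - L 4 2, L 3 1 * L 4 3 - L 4 1, L 3 1, L 3 2, L 2 1, L 4 3)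

lemma Mat_Lo (p : E7) : Mat p ∈ Lo1 5 := by
  refine ⟨?_, ?_⟩
  · intro i; fin_cases i <;> simp [Mat]
  · intro i j hij
    fin_cases i <;> fin_cases j <;> first | (exfalso; revert hij; decide) | simp [Mat]

lemma det_Lo {L : Matrix (Fin 5) (Fin 5) ℝ} (hL : L ∈ Lo1 5) : L.det = 1 := by
  have : L.BlockTriangular OrderDual.toDual := fun i j hij => hL.2 i j hij
  rw [Matrix.det_of_isLowerTriangular L this]
  simp [hL.1]

lemma Mat_BL (p : E7) (hp : p ∈ P) : Mat p ∈ BL 5 σ45132 := by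
  refine ⟨Mat_Lo p, ?_⟩
  have hdet := det_Lo (Mat_Lo p)
  obtain ⟨b, x, y, d, e, c, h⟩ := p
  obtain ⟨hb, hu, hv, hw⟩ := hp
  obtain ⟨u, hu'⟩ : ∃ u, x * c - y = u := ⟨_, rfl⟩
  obtain ⟨f, hf'⟩ : ∃ f, d * h - y = f := ⟨_, rfl⟩
  obtain ⟨w, hw'⟩ : ∃ w, d * x - e * y = w := ⟨_, rfl⟩
  rw [hu'] at hu
  rw [hf'] at hv
  rw [hw'] at hw

  let g := e * h - x
  let α := x / u
  let γ := (1 - α * c) / f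
  let β := -(α + γ * g) * f / w
  let p := 1 / b
  let q := -(p * c) / f
  let r := -(p + q * g) * f / w
  let U : Matrix (Fin 5) (Fin 5) ℝ :=
    !![1, 0, p, r, q;
       0, 1, α, β, γ;
       0, 0, 1, 0, 0;
       0, 0, 0, 1, d / f;
       0, 0, 0, 0, 1]
  let V : Matrix (Fin 5) (Fin 5) ℝ :=
    !![b, c, 1, 0, 0;
       0, f, g, h, 1;
       0, 0, w / f, 1 - d * h / f, - d / f;
       0, 0, 0, -(q * h + r * (1 - d * h / f)), -(q - r * d / f);
       0, 0, 0, 0, -(γ - β * d / f)]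
  have hmul : Mat (b, x, y, d, e, c, h) = U * permMat 5 σ45132 * V := by
    have hent : ∀ i j, (U * permMat 5 σ45132 * V) i j = U i 0 * V 3 j + U i 1 * V 4 j + U i 2 * V 0 j
        + U i 3 * V 2 j + U i 4 * V 1 j := by
      intro i j
      simp only [Matrix.mul_apply, permMat, Fin.sum_univ_five, σ45132]
      simp
      ring
    ext i j
    rw [hent]
    fin_cases i <;> fin_cases j <;>
      simp [U, V, Mat, hu', hf'] <;> (try simp only [p, q, r, α, β, γ, g]) <;>
      (try field_simp) <;> (try subst hu' hf' hw') <;> (try ring)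
  have hd2 : U.det * (permMat 5 σ45132).det * V.det = 1 := by
    rw [← Matrix.det_mul, ← Matrix.det_mul, ← hmul, hdet]
  refine ⟨U, ⟨?_, ?_⟩, V, ⟨?_, ?_⟩, hmul⟩
  · intro i j hij
    fin_cases i <;> fin_cases j <;> first | (exfalso; revert hij; decide) | simp [U]
  · rw [isUnit_iff_ne_zero]; intro h0; rw [h0] at hd2; simp at hd2
  · intro i j hij
    fin_cases i <;> fin_cases j <;> first | (exfalso; revert hij; decide) | simp [V]
  · rw [isUnit_iff_ne_zero]; intro h0; rw [h0] at hd2; simp at hd2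

lemma par_P (L : Matrix (Fin 5) (Fin 5) ℝ) (hL : L ∈ BL 5 σ45132) : par L ∈ P := by
  obtain ⟨h30, h40, h20, h41, hD, heq⟩ := BL_cond L hL
  have hw : L 3 1 * (L 3 2 * L 4 3 - L 4 2) - L 3 2 * (L 3 1 * L 4 3 - L 4 1) ≠ 0 := by
    intro h0; apply hD; linear_combination h0
  refine ⟨h20, ?_, ?_, hw⟩
  · intro h0
    have h1 : L 2 0 * (L 3 2 * L 4 3 - L 4 2) = 0 := by
      rw [← heq]; linear_combination L 1 0 * h0
    have hx := (mul_eq_zero.mp h1).resolve_left h20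
    have hy : L 3 1 * L 4 3 - L 4 1 = 0 := by linear_combination L 2 1 * hx - h0
    apply hw; rw [hx, hy]; ring
  · intro h0; apply h41; linear_combination h0

lemma Mat_par (L : Matrix (Fin 5) (Fin 5) ℝ) (hL : L ∈ BL 5 σ45132) : Mat (par L) = L := by
  obtain ⟨h30, h40, h20, h41, hD, heq⟩ := BL_cond L hL
  obtain ⟨-, hu, -, -⟩ := par_P L hL
  obtain ⟨⟨hd, hlo⟩, -⟩ := hL
  ext i j
  fin_cases i <;> fin_cases j <;> first
    | exact (hd _).symm
    | exact (hlo _ _ (by decide)).symm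
    | exact h30.symm
    | exact h40.symm
    | rfl
    | (simp [Mat, par]; done)
    | (change L 2 0 * (L 3 2 * L 4 3 - L 4 2) /
        ((L 3 2 * L 4 3 - L 4 2) * L 2 1 - (L 3 1 * L 4 3 - L 4 1)) = L 1 0
       rw [div_eq_iff hu]; linear_combination -heq)

lemma par_Mat (p : E7) : par (Mat p) = p := by
  obtain ⟨b, x, y, d, e, c, h⟩ := p
  simp [par, Mat]

lemma Mat_cont : ContinuousOn Mat P := by
  have h1 : ∀ p ∈ P, p.2.1 * p.2.2.2.2.2.1 - p.2.2.1 ≠ 0 := by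
    rintro ⟨b, x, y, d, e, c, h⟩ ⟨hb, hu, hv, hw⟩; exact hu
  refine continuousOn_pi.mpr fun i => continuousOn_pi.mpr fun j => ?_
  fin_cases i <;> fin_cases j <;> simp [Mat] <;> fun_prop (disch := assumption)

noncomputable def Phi : BL 5 σ45132 ≃ₜ P where
  toFun L := ⟨par L, par_P L L.2⟩
  invFun p := ⟨Mat p, Mat_BL p p.2⟩
  left_inv L := Subtype.ext (Mat_par L L.2)
  right_inv p := Subtype.ext (par_Mat p)
  continuous_toFun := by
    refine Continuous.subtype_mk ?_ _
    unfold par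
    have : ∀ i j, Continuous (fun L : BL 5 σ45132 => (L : Matrix (Fin 5) (Fin 5) ℝ) i j) :=
      fun i j => continuous_subtype_val.matrix_elem i j
    have h20 := this 2 0
    have h32 := this 3 2
    have h43 := this 4 3
    have h42 := this 4 2
    have h31 := this 3 1
    have h41 := this 4 1
    have h21 := this 2 1
    exact h20.prodMk (((h32.mul h43).sub h42).prodMk (((h31.mul h43).sub h41).prodMk
      (h31.prodMk (h32.prodMk (h21.prodMk h43)))))
  continuous_invFun :=
    Continuous.subtype_mk (continuousOn_iff_continuous_domRestrict.mp Mat_cont) _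

end BLproof

/-- `BL_{[45132]} ⊂ Lo¹₅` has exactly 40 connected components,
all of which are contractible. -/
theorem stmt5 :
    Nat.card (ConnectedComponents ↥(BL 5 σ45132)) = 40 ∧
      ∀ L : ↥(BL 5 σ45132), ContractibleSpace ↥(connectedComponent L) := by
  exact BLproof.main_P BLproof.Phi
end

section
/- Let σ ∈ S₅ be the permutation with σ(1)=4, σ(2)=3, σ(3)=5, σ(4)=2, σ(5)=1 (complete notation [43521]). The set BL_σ ⊂ Lo¹₅ has exactly 48 connected components, and every connected component of BL_σ is contractible. -/
open Matrix

/-- The permutation `[43521] ∈ S₅` (in `1`-indexed complete notation), i.e.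
`σ(1)=4, σ(2)=3, σ(3)=5, σ(4)=2, σ(5)=1`, written `0`-indexed on `Fin 5`. -/
def σ43521 : Equiv.Perm (Fin 5) :=
  ⟨![3, 2, 4, 1, 0], ![4, 3, 1, 0, 2], by decide, by decide⟩
lemma main_top {X Y I : Type} [TopologicalSpace X] [TopologicalSpace Y]
    (e : X → Y) (he : Topology.IsEmbedding e) (S : I → Set Y)
    (hopen : ∀ i, IsOpen (S i)) (hcover : Set.range e = ⋃ i, S i)
    (hdisj : ∀ i j y, y ∈ S i → y ∈ S j → i = j)
    (hc : ∀ i, ContractibleSpace (S i)) :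
    Nat.card (ConnectedComponents X) = Nat.card I ∧
      ∀ x : X, ContractibleSpace (connectedComponent x) := by
  have hsub : ∀ i, S i ⊆ Set.range e := fun i => hcover ▸ Set.subset_iUnion S i
  have hmem : ∀ x, ∃ i, e x ∈ S i := fun x => by
    have : e x ∈ ⋃ i, S i := hcover ▸ Set.mem_range_self x
    simpa using this
  have himg : ∀ i, e '' (e ⁻¹' S i) = S i := fun i =>
    Set.image_preimage_eq_of_subset (hsub i)
  have hcon : ∀ i, ContractibleSpace (e ⁻¹' S i) := fun i => by
    have h1 : (e ⁻¹' S i) ≃ₜ S i :=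
      (he.homeomorphImage (e ⁻¹' S i)).trans (Homeomorph.setCongr (himg i))
    have := hc i
    exact h1.contractibleSpace
  have hclopen : ∀ i, IsClopen (e ⁻¹' S i) := fun i => by
    refine ⟨?_, (hopen i).preimage he.continuous⟩
    have : (e ⁻¹' S i)ᶜ = ⋃ j ∈ {j | j ≠ i}, e ⁻¹' S j := by
      ext x
      simp only [Set.mem_compl_iff, Set.mem_preimage, Set.mem_iUnion, Set.mem_ofPred_eq,
        exists_prop]
      constructor
      · intro h
        obtain ⟨j, hj⟩ := hmem x
        exact ⟨j, fun hji => h (hji ▸ hj), hj⟩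
      · rintro ⟨j, hj, hx⟩ h
        exact hj (hdisj _ _ _ hx h)
    rw [← isOpen_compl_iff, this]
    exact isOpen_biUnion fun j _ => (hopen j).preimage he.continuous
  have hcc : ∀ i x, e x ∈ S i → connectedComponent x = e ⁻¹' S i := fun i x hx => by
    apply Set.Subset.antisymm
    · exact (hclopen i).connectedComponent_subset hx
    · have : IsPreconnected (e ⁻¹' S i) := by
        have := hcon i
        exact isPreconnected_iff_preconnectedSpace.2 inferInstance
      exact this.subset_connectedComponent hx
  constructor
  · have hne : ∀ i, ∃ x, e x ∈ S i := fun i => by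
      have := hcon i
      obtain ⟨⟨x, hx⟩⟩ : Nonempty (e ⁻¹' S i) := inferInstance
      exact ⟨x, hx⟩
    choose x hx using hne
    refine (Nat.card_congr (Equiv.ofBijective
      (fun i => (ConnectedComponents.mk (x i))) ⟨?_, ?_⟩)).symm
    · intro i j hij
      have := ConnectedComponents.coe_eq_coe.1 hij
      rw [hcc i _ (hx i), hcc j _ (hx j)] at this
      have h2 : x i ∈ e ⁻¹' S j := this ▸ hx i
      exact hdisj _ _ _ (hx i) h2
    · intro q
      obtain ⟨y, rfl⟩ := ConnectedComponents.surjective_coe q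
      obtain ⟨i, hi⟩ := hmem y
      refine ⟨i, ConnectedComponents.coe_eq_coe.2 ?_⟩
      rw [hcc i _ (hx i), hcc i _ hi]
  · intro y
    obtain ⟨i, hi⟩ := hmem y
    rw [hcc i _ hi]
    exact hcon i

lemma contr_dom {S C : Type} [TopologicalSpace S] [TopologicalSpace C] [ContractibleSpace C]
    (f : S → C) (hf : Continuous f) (g : C → S) (hg : Continuous g)
    (H : unitInterval × S → S) (hH : Continuous H) (h0 : ∀ x, H (0, x) = x)
    (h1 : ∀ x, H (1, x) = g (f x)) : ContractibleSpace S := by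
  rw [contractible_iff_id_nullhomotopic]
  let f' : C(S, C) := ⟨f, hf⟩
  let g' : C(C, S) := ⟨g, hg⟩
  have h : (ContinuousMap.id S).Homotopic (g'.comp ((ContinuousMap.id C).comp f')) := by
    refine ⟨⟨⟨H, hH⟩, ?_, ?_⟩⟩
    · intro x; simpa using h0 x
    · intro x; simpa [f', g'] using h1 x
  obtain ⟨y, hy⟩ := id_nullhomotopic C
  refine ⟨g' y, h.trans ?_⟩
  have := hy.comp (ContinuousMap.Homotopic.refl f')
  have := (ContinuousMap.Homotopic.refl g').comp this
  exact this

noncomputable section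

def Th (l D : ℝ) : ℝ := Complex.arg ⟨1 - l * D, -l⟩
def rr (l D : ℝ) : ℝ := √((1 - l * D) ^ 2 + l ^ 2)

lemma rad_pos (l D : ℝ) : 0 < (1 - l * D) ^ 2 + l ^ 2 := by
  rcases eq_or_ne l 0 with h | h
  · subst h; norm_num
  · positivity

lemma rr_pos (l D : ℝ) : 0 < rr l D := Real.sqrt_pos.2 (rad_pos l D)

lemma rr_sq (l D : ℝ) : rr l D ^ 2 = (1 - l * D) ^ 2 + l ^ 2 := Real.sq_sqrt (rad_pos l D).le

lemma rr_eq (l D : ℝ) : rr l D = ‖(⟨1 - l * D, -l⟩ : ℂ)‖ := by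
  rw [rr, Complex.norm_def, Complex.normSq_mk]
  congr 1; ring

lemma rr_cos (l D : ℝ) : rr l D * Real.cos (Th l D) = 1 - l * D := by
  rw [rr_eq, Th, Complex.norm_mul_cos_arg]

lemma rr_sin (l D : ℝ) : rr l D * Real.sin (Th l D) = -l := by
  rw [rr_eq, Th, Complex.norm_mul_sin_arg]

lemma slit (l D : ℝ) : (⟨1 - l * D, -l⟩ : ℂ) ∈ Complex.slitPlane := by
  rw [Complex.mem_slitPlane_iff]
  rcases eq_or_ne l 0 with h | h
  · left; subst h; norm_num
  · right; simpa using h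

lemma Th_cont : Continuous (fun p : ℝ × ℝ => Th p.1 p.2) := by
  rw [continuous_iff_continuousAt]
  intro p
  have h1 : Continuous (fun p : ℝ × ℝ => (⟨1 - p.1 * p.2, -p.1⟩ : ℂ)) := by
    have : (fun p : ℝ × ℝ => (⟨1 - p.1 * p.2, -p.1⟩ : ℂ)) =
      fun p : ℝ × ℝ => ((1 - p.1 * p.2 : ℝ) : ℂ) + ((-p.1 : ℝ) : ℂ) * Complex.I := by
      funext p; apply Complex.ext <;> simp
    rw [this]; fun_prop
  exact (Complex.continuousAt_arg (slit p.1 p.2)).comp (f := fun p : ℝ × ℝ => (⟨1 - p.1 * p.2, -p.1⟩ : ℂ)) h1.continuousAt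

lemma Th_cont' {X : Type} [TopologicalSpace X] {f g : X → ℝ} (hf : Continuous f) (hg : Continuous g) :
    Continuous (fun x => Th (f x) (g x)) := Th_cont.comp (hf.prodMk hg)

lemma rr_cont' {X : Type} [TopologicalSpace X] {f g : X → ℝ} (hf : Continuous f) (hg : Continuous g) :
    Continuous (fun x => rr (f x) (g x)) := by unfold rr; fun_prop

lemma Th_lt (l D : ℝ) : Th l D < Real.pi := by
  refine lt_of_le_of_ne (Complex.arg_le_pi _) ?_
  exact Complex.slitPlane_arg_ne_pi (slit l D)

lemma lt_Th (l D : ℝ) : -Real.pi < Th l D := Complex.neg_pi_lt_arg _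

lemma Th_eq {l D r θ : ℝ} (hr : 0 < r) (h1 : -Real.pi < θ) (h2 : θ ≤ Real.pi)
    (hc : 1 - l * D = r * Real.cos θ) (hs : -l = r * Real.sin θ) : Th l D = θ := by
  rw [Th, hc, hs]
  have := Complex.arg_mul_cos_add_sin_mul_I hr ⟨h1, h2⟩
  convert this using 2
  apply Complex.ext <;> simp [Complex.cos_ofReal_re, Complex.sin_ofReal_re]

def mm (t l D : ℝ) : ℝ := ((1 - t) * rr l D + t) / rr l D
def nl (t l D : ℝ) : ℝ := l * mm t l D
def nD (t l D : ℝ) : ℝ :=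
  D + t * (l + l * D ^ 2 - 2 * D) / ((rr l D + 1) * ((1 - t) * rr l D + t))

lemma den_pos {t : ℝ} (ht : t ∈ Set.Icc (0 : ℝ) 1) (l D : ℝ) : 0 < (1 - t) * rr l D + t := by
  have := rr_pos l D
  rcases eq_or_lt_of_le ht.1 with h | h
  · subst h; simpa
  · have := mul_nonneg (sub_nonneg.2 ht.2) this.le
    linarith

lemma mm_pos {t : ℝ} (ht : t ∈ Set.Icc (0 : ℝ) 1) (l D : ℝ) : 0 < mm t l D :=
  div_pos (den_pos ht l D) (rr_pos l D)

lemma n_key {t : ℝ} (ht : t ∈ Set.Icc (0 : ℝ) 1) (l D : ℝ) :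
    1 - nl t l D * nD t l D = mm t l D * (1 - l * D) := by
  have h1 := (den_pos ht l D).ne'
  have h2 := rr_pos l D
  have h3 := rr_sq l D
  unfold nl nD mm
  generalize rr l D = r at *
  have h4 : r + 1 ≠ 0 := by positivity
  have h5 : r ≠ 0 := h2.ne'
  field_simp
  linear_combination t * h3

lemma n_Th {t : ℝ} (ht : t ∈ Set.Icc (0 : ℝ) 1) (l D : ℝ) :
    Th (nl t l D) (nD t l D) = Th l D := by
  refine Th_eq (mul_pos (mm_pos ht l D) (rr_pos l D)) (lt_Th _ _) (Th_lt _ _).le ?_ ?_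
  · rw [n_key ht, mul_assoc, rr_cos]
  · rw [mul_assoc, rr_sin, nl]; ring

def secl (θ : ℝ) : ℝ := -Real.sin θ
def secD (θ : ℝ) : ℝ := -Real.sin θ / (1 + Real.cos θ)

lemma cos_pos' {θ : ℝ} (h1 : -Real.pi < θ) (h2 : θ < Real.pi) : 0 < 1 + Real.cos θ := by
  have h : 0 < Real.cos (θ / 2) := Real.cos_pos_of_mem_Ioo ⟨by linarith, by linarith⟩
  have := Real.cos_sq (θ / 2)
  rw [mul_div_cancel₀ _ (two_ne_zero)] at this
  nlinarith [pow_pos h 2]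

lemma sec_key {θ : ℝ} (h1 : -Real.pi < θ) (h2 : θ < Real.pi) :
    1 - secl θ * secD θ = Real.cos θ := by
  have := (cos_pos' h1 h2).ne'
  unfold secl secD
  field_simp
  linear_combination -Real.sin_sq_add_cos_sq θ

lemma sec_Th {θ : ℝ} (h1 : -Real.pi < θ) (h2 : θ < Real.pi) : Th (secl θ) (secD θ) = θ := by
  refine Th_eq one_pos h1 h2.le ?_ ?_
  · rw [sec_key h1 h2, one_mul]
  · simp [secl]

lemma nl_one (l D : ℝ) : nl 1 l D = secl (Th l D) := by
  have h5 := (rr_pos l D).ne'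
  unfold nl secl mm
  have := rr_sin l D
  field_simp
  linarith

lemma nD_one (l D : ℝ) : nD 1 l D = secD (Th l D) := by
  have hp := rr_pos l D
  have h6 := (cos_pos' (lt_Th l D) (Th_lt l D)).ne'
  have h3 := rr_sq l D
  have hs := rr_sin l D
  have hc := rr_cos l D
  unfold nD secD
  generalize rr l D = r at *
  have h5 := hp.ne'
  have h7 : r + 1 ≠ 0 := by positivity
  have e1 : -Real.sin (Th l D) / (1 + Real.cos (Th l D)) = l / (r + (1 - l * D)) := by
    have : r + (1 - l * D) = r * (1 + Real.cos (Th l D)) := by rw [← hc]; ring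
    rw [this, div_eq_div_iff h6 (mul_ne_zero h5 h6)]
    linear_combination -(1 + Real.cos (Th l D)) * hs
  have h8 : r + (1 - l * D) ≠ 0 := by
    have : r + (1 - l * D) = r * (1 + Real.cos (Th l D)) := by rw [← hc]; ring
    rw [this]; exact mul_ne_zero h5 h6
  rw [e1, eq_div_iff h8]
  have h9 : D + 1 * (l + l * D ^ 2 - 2 * D) / ((r + 1) * ((1 - 1) * r + 1)) =
      (D * (r + 1) + (l + l * D ^ 2 - 2 * D)) / (r + 1) := by field_simp; ring
  rw [h9, div_mul_eq_mul_div, div_eq_iff h7]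
  linear_combination D * h3

lemma n_zero (l D : ℝ) : nl 0 l D = l ∧ nD 0 l D = D := by
  have h5 := (rr_pos l D).ne'
  constructor
  · simp [nl, mm, h5]
  · simp [nD]

lemma nl_cont {X : Type} [TopologicalSpace X] {f g : X → ℝ} {t : X → unitInterval}
    (ht : Continuous t) (hf : Continuous f) (hg : Continuous g) :
    Continuous (fun x => nl (t x) (f x) (g x)) := by
  have := rr_cont' hf hg
  unfold nl mm
  have h : ∀ x, rr (f x) (g x) ≠ 0 := fun x => (rr_pos _ _).ne'
  fun_prop (disch := assumption)

lemma nD_cont {X : Type} [TopologicalSpace X] {f g : X → ℝ} {t : X → unitInterval}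
    (ht : Continuous t) (hf : Continuous f) (hg : Continuous g) :
    Continuous (fun x => nD (t x) (f x) (g x)) := by
  have := rr_cont' hf hg
  unfold nD
  have h : ∀ x, (rr (f x) (g x) + 1) * ((1 - (t x : ℝ)) * rr (f x) (g x) + (t x : ℝ)) ≠ 0 :=
    fun x => (mul_pos (add_pos (rr_pos _ _) one_pos) (den_pos (t x).2 _ _)).ne'
  fun_prop (disch := assumption)

end

noncomputable section

abbrev PP := ℝ × ℝ × ℝ × ℝ × ℝ × ℝ × ℝ × ℝ

def q1 (K F l D : ℝ) : ℝ := K * (1 - l * D) - l * F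
def q2 (K F a H : ℝ) : ℝ := a * K + F * (1 - a * H)

def SS (sg sE s1 s2 lo hi : ℝ) : Set PP :=
  {x | 0 < sg * x.1 ∧ 0 < sE * x.2.1 ∧
    0 < s1 * q1 x.2.2.1 x.2.2.2.1 x.2.2.2.2.1 x.2.2.2.2.2.1 ∧
    0 < s2 * q2 x.2.2.1 x.2.2.2.1 x.2.2.2.2.2.2.1 x.2.2.2.2.2.2.2 ∧
    lo < Th x.2.2.2.2.1 x.2.2.2.2.2.1 - Th x.2.2.2.2.2.2.1 x.2.2.2.2.2.2.2 ∧
    Th x.2.2.2.2.1 x.2.2.2.2.2.1 - Th x.2.2.2.2.2.2.1 x.2.2.2.2.2.2.2 < hi}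

lemma SS_open (sg sE s1 s2 lo hi : ℝ) : IsOpen (SS sg sE s1 s2 lo hi) := by
  have h1 : Continuous fun x : PP => Th x.2.2.2.2.1 x.2.2.2.2.2.1 :=
    Th_cont' (by fun_prop) (by fun_prop)
  have h2 : Continuous fun x : PP => Th x.2.2.2.2.2.2.1 x.2.2.2.2.2.2.2 :=
    Th_cont' (by fun_prop) (by fun_prop)
  unfold SS q1 q2
  refine IsOpen.and ?_ (IsOpen.and ?_ (IsOpen.and ?_ (IsOpen.and ?_ (IsOpen.and ?_ ?_))))
  all_goals exact isOpen_lt (by fun_prop) (by fun_prop)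

def CC (lo hi : ℝ) : Set (ℝ × ℝ) :=
  (Set.Ioo (-Real.pi) Real.pi ×ˢ Set.Ioo (-Real.pi) Real.pi) ∩
    (LinearMap.fst ℝ ℝ ℝ - LinearMap.snd ℝ ℝ ℝ) ⁻¹' Set.Ioo lo hi

lemma CC_convex (lo hi : ℝ) : Convex ℝ (CC lo hi) :=
  ((convex_Ioo _ _).prod (convex_Ioo _ _)).inter ((convex_Ioo lo hi).linear_preimage _)

lemma mem_CC {lo hi : ℝ} {p : ℝ × ℝ} : p ∈ CC lo hi ↔
    ((-Real.pi < p.1 ∧ p.1 < Real.pi) ∧ (-Real.pi < p.2 ∧ p.2 < Real.pi)) ∧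
      (lo < p.1 - p.2 ∧ p.1 - p.2 < hi) := Iff.rfl

def pK (s1 s2 θ φ : ℝ) : ℝ := s1 * Real.cos θ - s2 * Real.sin φ
def pF (s1 s2 θ φ : ℝ) : ℝ := s1 * Real.sin θ + s2 * Real.cos φ

lemma comb_pos {t a b : ℝ} (ht : t ∈ Set.Icc (0 : ℝ) 1) (ha : 0 < a) (hb : 0 < b) :
    0 < (1 - t) * a + t * b := by
  rcases eq_or_lt_of_le ht.1 with h | h
  · subst h; simpa
  · have := mul_nonneg (sub_nonneg.2 ht.2) ha.le
    have := mul_pos h hb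
    linarith

lemma q1_pos {s1 s2 K F l D l' D' m r θ φ t : ℝ} (ht : t ∈ Set.Icc (0 : ℝ) 1) (h1 : s1 ^ 2 = 1)
    (hm : 0 < m) (hr : 0 < r) (hl : l' = l * m) (hD : 1 - l' * D' = m * (1 - l * D))
    (hc : r * Real.cos θ = 1 - l * D) (hs : r * Real.sin θ = -l)
    (hq : 0 < s1 * q1 K F l D) (hd : 0 < 1 + s1 * s2 * Real.sin (θ - φ)) :
    0 < s1 * q1 ((1 - t) * K + t * pK s1 s2 θ φ) ((1 - t) * F + t * pF s1 s2 θ φ) l' D' := by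
  have := mul_pos hm (comb_pos ht hq (mul_pos hr hd))
  refine lt_of_lt_of_eq this (Eq.symm ?_)
  unfold q1 pK pF
  rw [hD, hl, ← hc, show l = - (r * Real.sin θ) by linarith, Real.sin_sub]
  linear_combination (m * t * r * (Real.sin θ ^ 2 + Real.cos θ ^ 2)) * h1
    + m * t * r * (Real.sin_sq_add_cos_sq θ)

lemma q2_pos {s1 s2 K F l D l' D' m r θ φ t : ℝ} (ht : t ∈ Set.Icc (0 : ℝ) 1) (h1 : s2 ^ 2 = 1)
    (hm : 0 < m) (hr : 0 < r) (hl : l' = l * m) (hD : 1 - l' * D' = m * (1 - l * D))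
    (hc : r * Real.cos φ = 1 - l * D) (hs : r * Real.sin φ = -l)
    (hq : 0 < s2 * q2 K F l D) (hd : 0 < 1 + s1 * s2 * Real.sin (θ - φ)) :
    0 < s2 * q2 ((1 - t) * K + t * pK s1 s2 θ φ) ((1 - t) * F + t * pF s1 s2 θ φ) l' D' := by
  have := mul_pos hm (comb_pos ht hq (mul_pos hr hd))
  refine lt_of_lt_of_eq this (Eq.symm ?_)
  unfold q2 pK pF
  rw [hD, hl, ← hc, show l = - (r * Real.sin φ) by linarith, Real.sin_sub]
  linear_combination (m * t * r * (Real.sin φ ^ 2 + Real.cos φ ^ 2)) * h1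
    + m * t * r * (Real.sin_sq_add_cos_sq φ)

def homx (sg sE s1 s2 t : ℝ) (x : PP) : PP :=
  ((1 - t) * x.1 + t * sg, (1 - t) * x.2.1 + t * sE,
   (1 - t) * x.2.2.1 + t * pK s1 s2 (Th x.2.2.2.2.1 x.2.2.2.2.2.1)
      (Th x.2.2.2.2.2.2.1 x.2.2.2.2.2.2.2),
   (1 - t) * x.2.2.2.1 + t * pF s1 s2 (Th x.2.2.2.2.1 x.2.2.2.2.2.1)
      (Th x.2.2.2.2.2.2.1 x.2.2.2.2.2.2.2),
   nl t x.2.2.2.2.1 x.2.2.2.2.2.1, nD t x.2.2.2.2.1 x.2.2.2.2.2.1,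
   nl t x.2.2.2.2.2.2.1 x.2.2.2.2.2.2.2, nD t x.2.2.2.2.2.2.1 x.2.2.2.2.2.2.2)

def secx (sg sE s1 s2 : ℝ) (p : ℝ × ℝ) : PP :=
  (sg, sE, pK s1 s2 p.1 p.2, pF s1 s2 p.1 p.2, secl p.1, secD p.1, secl p.2, secD p.2)

lemma homx_mem {sg sE s1 s2 lo hi t : ℝ} (hg : sg ^ 2 = 1) (hE : sE ^ 2 = 1) (h1 : s1 ^ 2 = 1)
    (h2 : s2 ^ 2 = 1) (hd : ∀ δ, lo < δ → δ < hi → 0 < 1 + s1 * s2 * Real.sin δ)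
    (ht : t ∈ Set.Icc (0 : ℝ) 1) {x : PP} (hx : x ∈ SS sg sE s1 s2 lo hi) :
    homx sg sE s1 s2 t x ∈ SS sg sE s1 s2 lo hi := by
  obtain ⟨g, E, K, F, l, D, a, H⟩ := x
  obtain ⟨x1, x2, x3, x4, x5, x6⟩ := hx
  dsimp only at *
  have hd' := hd _ x5 x6
  refine ⟨?_, ?_, ?_, ?_, ?_, ?_⟩
  · have := comb_pos ht x1 one_pos
    dsimp only [homx]
    linear_combination this - t * hg
  · have := comb_pos ht x2 one_pos
    dsimp only [homx]
    linear_combination this - t * hE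
  · exact q1_pos ht h1 (mm_pos ht l D) (rr_pos l D) rfl (n_key ht l D) (rr_cos l D) (rr_sin l D)
      x3 hd'
  · exact q2_pos ht h2 (mm_pos ht a H) (rr_pos a H) rfl (n_key ht a H) (rr_cos a H) (rr_sin a H)
      x4 hd'
  · dsimp only [homx]; rw [n_Th ht, n_Th ht]; exact x5
  · dsimp only [homx]; rw [n_Th ht, n_Th ht]; exact x6

lemma secx_mem {sg sE s1 s2 lo hi : ℝ} (hg : sg ^ 2 = 1) (hE : sE ^ 2 = 1) (h1 : s1 ^ 2 = 1)
    (h2 : s2 ^ 2 = 1) (hd : ∀ δ, lo < δ → δ < hi → 0 < 1 + s1 * s2 * Real.sin δ)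
    {p : ℝ × ℝ} (hp : p ∈ CC lo hi) : secx sg sE s1 s2 p ∈ SS sg sE s1 s2 lo hi := by
  obtain ⟨θ, φ⟩ := p
  obtain ⟨⟨⟨a1, a2⟩, a3, a4⟩, a5, a6⟩ := mem_CC.1 hp
  dsimp only at *
  have hd' := hd _ a5 a6
  refine ⟨?_, ?_, ?_, ?_, ?_, ?_⟩ <;> dsimp only [secx]
  · rw [← pow_two, hg]; exact one_pos
  · rw [← pow_two, hE]; exact one_pos
  · convert hd' using 1
    unfold q1
    rw [sec_key a1 a2, Real.sin_sub]
    unfold secl pK pF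
    linear_combination (Real.sin θ ^ 2 + Real.cos θ ^ 2) * h1 + Real.sin_sq_add_cos_sq θ
  · convert hd' using 1
    unfold q2
    rw [sec_key a3 a4, Real.sin_sub]
    unfold secl pK pF
    linear_combination (Real.sin φ ^ 2 + Real.cos φ ^ 2) * h2 + Real.sin_sq_add_cos_sq φ
  · rw [sec_Th a1 a2, sec_Th a3 a4]; exact a5
  · rw [sec_Th a1 a2, sec_Th a3 a4]; exact a6

lemma SS_contr {sg sE s1 s2 lo hi : ℝ} (hg : sg ^ 2 = 1) (hE : sE ^ 2 = 1) (h1 : s1 ^ 2 = 1)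
    (h2 : s2 ^ 2 = 1) (hd : ∀ δ, lo < δ → δ < hi → 0 < 1 + s1 * s2 * Real.sin δ)
    (hne : (CC lo hi).Nonempty) : ContractibleSpace (SS sg sE s1 s2 lo hi) := by
  have : ContractibleSpace (CC lo hi) := (CC_convex lo hi).contractibleSpace hne
  refine contr_dom (C := CC lo hi)
    (fun x => ⟨(Th x.1.2.2.2.2.1 x.1.2.2.2.2.2.1, Th x.1.2.2.2.2.2.2.1 x.1.2.2.2.2.2.2.2),
      mem_CC.2 ⟨⟨⟨lt_Th _ _, Th_lt _ _⟩, ⟨lt_Th _ _, Th_lt _ _⟩⟩, x.2.2.2.2.2⟩⟩) ?_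
    (fun p => ⟨secx sg sE s1 s2 p.1, secx_mem hg hE h1 h2 hd p.2⟩) ?_
    (fun y => ⟨homx sg sE s1 s2 y.1 y.2.1, homx_mem hg hE h1 h2 hd y.1.2 y.2.2⟩) ?_ ?_ ?_
  · refine Continuous.subtype_mk ?_ _
    exact (Th_cont' (by fun_prop) (by fun_prop)).prodMk (Th_cont' (by fun_prop) (by fun_prop))
  · refine Continuous.subtype_mk ?_ _
    unfold secx pK pF secl secD
    have e1 : ∀ p : CC lo hi, 1 + Real.cos p.1.1 ≠ 0 := fun p =>
      (cos_pos' p.2.1.1.1 p.2.1.1.2).ne'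
    have e2 : ∀ p : CC lo hi, 1 + Real.cos p.1.2 ≠ 0 := fun p =>
      (cos_pos' p.2.1.2.1 p.2.1.2.2).ne'
    fun_prop (disch := assumption)
  · refine Continuous.subtype_mk ?_ _
    have c1 : Continuous fun y : unitInterval × SS sg sE s1 s2 lo hi =>
      Th y.2.1.2.2.2.2.1 y.2.1.2.2.2.2.2.1 := Th_cont' (by fun_prop) (by fun_prop)
    have c2 : Continuous fun y : unitInterval × SS sg sE s1 s2 lo hi =>
      Th y.2.1.2.2.2.2.2.2.1 y.2.1.2.2.2.2.2.2.2 := Th_cont' (by fun_prop) (by fun_prop)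
    unfold homx pK pF
    refine Continuous.prodMk (by fun_prop) (Continuous.prodMk (by fun_prop)
      (Continuous.prodMk (by fun_prop) (Continuous.prodMk (by fun_prop) ?_)))
    exact (nl_cont (by fun_prop) (by fun_prop) (by fun_prop)).prodMk
      ((nD_cont (by fun_prop) (by fun_prop) (by fun_prop)).prodMk
      ((nl_cont (by fun_prop) (by fun_prop) (by fun_prop)).prodMk
      (nD_cont (by fun_prop) (by fun_prop) (by fun_prop))))
  · rintro ⟨⟨g, E, K, F, l, D, a, H⟩, hx⟩
    apply Subtype.ext
    simp [homx, n_zero]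
  · rintro ⟨⟨g, E, K, F, l, D, a, H⟩, hx⟩
    apply Subtype.ext
    simp [homx, secx, nl_one, nD_one]

def WW : Set PP :=
  {x | x.1 ≠ 0 ∧ x.2.1 ≠ 0 ∧ q1 x.2.2.1 x.2.2.2.1 x.2.2.2.2.1 x.2.2.2.2.2.1 ≠ 0 ∧
    q2 x.2.2.1 x.2.2.2.1 x.2.2.2.2.2.2.1 x.2.2.2.2.2.2.2 ≠ 0}

/-- sign of a boolean -/
def sb (b : Bool) : ℝ := if b then 1 else -1

lemma sb_sq (b : Bool) : sb b ^ 2 = 1 := by cases b <;> simp [sb]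

lemma sb_ex {x : ℝ} (hx : x ≠ 0) : ∃ b, 0 < sb b * x := by
  rcases lt_or_gt_of_ne hx with h | h
  · exact ⟨false, by simpa [sb] using h⟩
  · exact ⟨true, by simpa [sb] using h⟩

lemma sb_uniq {x : ℝ} {b c : Bool} (h : 0 < sb b * x) (h' : 0 < sb c * x) : b = c := by
  cases b <;> cases c <;> simp [sb] at * <;> linarith

def cut (e : ℝ) (k : Fin 4) : ℝ :=
  ![-2 * Real.pi, -Real.pi + e * (Real.pi / 2), Real.pi + e * (Real.pi / 2), 2 * Real.pi] k

abbrev II := Bool × Bool × Bool × Bool × Fin 3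

def SI (i : II) : Set PP :=
  SS (sb i.1) (sb i.2.1) (sb i.2.2.1) (sb i.2.2.2.1)
    (cut (sb i.2.2.1 * sb i.2.2.2.1) i.2.2.2.2.castSucc)
    (cut (sb i.2.2.1 * sb i.2.2.2.1) i.2.2.2.2.succ)

lemma sb_mul (b c : Bool) : sb b * sb c = 1 ∨ sb b * sb c = -1 := by
  cases b <;> cases c <;> simp [sb]

lemma sin_cut {e δ : ℝ} (he : e = 1 ∨ e = -1) (k : Fin 3) (h1 : cut e k.castSucc < δ)
    (h2 : δ < cut e k.succ) : 0 < 1 + e * Real.sin δ := by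
  have hpi := Real.pi_pos
  have key : ∀ j : ℤ, 2 * Real.pi * j - Real.pi < e * Real.pi / 2 - δ  →
      e * Real.pi / 2 - δ < 2 * Real.pi * j + Real.pi → 0 < 1 + e * Real.sin δ := by
    intro j a b
    have hh := cos_pos' (θ := e * Real.pi / 2 - δ - j * (2 * Real.pi)) (by linarith) (by linarith)
    rw [Real.cos_sub_int_mul_two_pi, Real.cos_sub] at hh
    rcases he with rfl | rfl
    · simpa using hh
    · rw [show -1 * Real.pi / 2 = -(Real.pi / 2) by ring] at hh
      simpa using hh
  rcases he with rfl | rfl <;> fin_cases k <;> simp [cut] at h1 h2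
  · exact key 1 (by push_cast; linarith) (by push_cast; linarith)
  · exact key 0 (by push_cast; linarith) (by push_cast; linarith)
  · exact key (-1) (by push_cast; linarith) (by push_cast; linarith)
  · exact key 1 (by push_cast; linarith) (by push_cast; linarith)
  · exact key 0 (by push_cast; linarith) (by push_cast; linarith)
  · exact key (-1) (by push_cast; linarith) (by push_cast; linarith)

lemma CC_ne {e : ℝ} (he : e = 1 ∨ e = -1) (k : Fin 3) :
    (CC (cut e k.castSucc) (cut e k.succ)).Nonempty := by
  have hpi := Real.pi_pos
  rcases he with rfl | rfl <;> fin_cases k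
  · refine ⟨(-Real.pi / 2, Real.pi / 2), mem_CC.2 ?_⟩
    simp [cut]; refine ⟨⟨⟨?_, ?_⟩, ?_, ?_⟩, ?_, ?_⟩ <;> linarith
  · refine ⟨(0, 0), mem_CC.2 ?_⟩
    refine ⟨⟨⟨?_, ?_⟩, ?_, ?_⟩, ?_, ?_⟩ <;> simp [cut] <;> linarith
  · refine ⟨(7 * Real.pi / 8, -7 * Real.pi / 8), mem_CC.2 ?_⟩
    simp [cut]; refine ⟨⟨⟨?_, ?_⟩, ?_, ?_⟩, ?_, ?_⟩ <;> linarith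
  · refine ⟨(-7 * Real.pi / 8, 7 * Real.pi / 8), mem_CC.2 ?_⟩
    simp [cut]; refine ⟨⟨⟨?_, ?_⟩, ?_, ?_⟩, ?_, ?_⟩ <;> linarith
  · refine ⟨(0, 0), mem_CC.2 ?_⟩
    refine ⟨⟨⟨?_, ?_⟩, ?_, ?_⟩, ?_, ?_⟩ <;> simp [cut] <;> linarith
  · refine ⟨(Real.pi / 2, -Real.pi / 2), mem_CC.2 ?_⟩
    simp [cut]; refine ⟨⟨⟨?_, ?_⟩, ?_, ?_⟩, ?_, ?_⟩ <;> linarith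

lemma SI_contr (i : II) : ContractibleSpace (SI i) :=
  SS_contr (sb_sq _) (sb_sq _) (sb_sq _) (sb_sq _) (fun _ => sin_cut (sb_mul _ _) _)
    (CC_ne (sb_mul _ _) _)

lemma SI_disj (i j : II) (y : PP) (hi : y ∈ SI i) (hj : y ∈ SI j) : i = j := by
  obtain ⟨i1, i2, i3, i4, k⟩ := i
  obtain ⟨j1, j2, j3, j4, k'⟩ := j
  obtain ⟨x1, x2, x3, x4, x5, x6⟩ := hi
  obtain ⟨y1, y2, y3, y4, y5, y6⟩ := hj
  dsimp only at *
  obtain rfl := sb_uniq x1 y1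
  obtain rfl := sb_uniq x2 y2
  obtain rfl := sb_uniq x3 y3
  obtain rfl := sb_uniq x4 y4
  suffices k = k' by rw [this]
  have hpi := Real.pi_pos
  have he := sb_mul i3 i4
  generalize sb i3 * sb i4 = e at *
  generalize Th y.2.2.2.2.1 y.2.2.2.2.2.1 - Th y.2.2.2.2.2.2.1 y.2.2.2.2.2.2.2 = δ at *
  rcases he with rfl | rfl <;> fin_cases k <;> fin_cases k' <;>
    first
    | rfl
    | (exfalso; simp [cut] at x5 x6 y5 y6; linarith)

lemma sin_ne {s1 s2 K F l D a H : ℝ} (h1 : s1 ^ 2 = 1) (h2 : s2 ^ 2 = 1)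
    (hq1 : 0 < s1 * q1 K F l D) (hq2 : 0 < s2 * q2 K F a H) :
    1 + s1 * s2 * Real.sin (Th l D - Th a H) ≠ 0 := by
  intro h
  have c1 := rr_cos l D
  have d1 := rr_sin l D
  have c2 := rr_cos a H
  have d2 := rr_sin a H
  have r1 := rr_pos l D
  have r2 := rr_pos a H
  rw [Real.sin_sub] at h
  have t1 := Real.sin_sq_add_cos_sq (Th l D)
  have t2 := Real.sin_sq_add_cos_sq (Th a H)
  generalize rr l D = r at *
  generalize rr a H = ρ at *
  generalize Real.sin (Th l D) = S at *
  generalize Real.cos (Th l D) = C at *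
  generalize Real.sin (Th a H) = S' at *
  generalize Real.cos (Th a H) = C' at *
  have z : (s1 * C - s2 * S') ^ 2 + (s1 * S + s2 * C') ^ 2 = 0 := by
    linear_combination 2 * h + t1 + t2 + (S ^ 2 + C ^ 2) * h1 + (S' ^ 2 + C' ^ 2) * h2
  have z1 : s1 * C - s2 * S' = 0 := by nlinarith [sq_nonneg (s1 * C - s2 * S'), sq_nonneg (s1 * S + s2 * C')]
  have z2 : s1 * S + s2 * C' = 0 := by nlinarith [sq_nonneg (s1 * C - s2 * S'), sq_nonneg (s1 * S + s2 * C')]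
  have e1 : s1 * q1 K F l D = r * (s1 * (K * C + F * S)) := by
    unfold q1; rw [← c1, show l = -(r * S) by linarith]; ring
  have e2 : s2 * q2 K F a H = ρ * (s2 * (F * C' - K * S')) := by
    unfold q2; rw [← c2, show a = -(ρ * S') by linarith]; ring
  rw [e1] at hq1
  rw [e2] at hq2
  have p1 := pos_of_mul_pos_right hq1 r1.le
  have p2 := pos_of_mul_pos_right hq2 r2.le
  have : s1 * (K * C + F * S) + s2 * (F * C' - K * S') = 0 := by
    linear_combination K * z1 + F * z2
  linarith

lemma SI_cover : WW = ⋃ i, SI i := by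
  ext ⟨g, E, K, F, l, D, a, H⟩
  simp only [Set.mem_iUnion]
  constructor
  · rintro ⟨w1, w2, w3, w4⟩
    dsimp only at *
    obtain ⟨b1, h1⟩ := sb_ex w1
    obtain ⟨b2, h2⟩ := sb_ex w2
    obtain ⟨b3, h3⟩ := sb_ex w3
    obtain ⟨b4, h4⟩ := sb_ex w4
    suffices ∃ k : Fin 3, cut (sb b3 * sb b4) k.castSucc < Th l D - Th a H ∧
        Th l D - Th a H < cut (sb b3 * sb b4) k.succ by
      obtain ⟨k, hk⟩ := this
      exact ⟨(b1, b2, b3, b4, k), h1, h2, h3, h4, hk⟩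
    have hs := sin_ne (sb_sq b3) (sb_sq b4) h3 h4
    have he := sb_mul b3 b4
    generalize sb b3 * sb b4 = e at *
    have u1 := lt_Th l D
    have u2 := Th_lt l D
    have u3 := lt_Th a H
    have u4 := Th_lt a H
    have v1 : -2 * Real.pi < Th l D - Th a H := by linarith
    have v2 : Th l D - Th a H < 2 * Real.pi := by linarith
    generalize Th l D - Th a H = δ at *
    have k1 : δ ≠ cut e 1 := by
      rintro rfl
      apply hs
      have : cut e 1 = -(Real.pi - e * (Real.pi / 2)) := by simp [cut]; ring
      rw [this, Real.sin_neg, Real.sin_pi_sub]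
      rcases he with rfl | rfl <;> simp
    have k2 : δ ≠ cut e 2 := by
      rintro rfl
      apply hs
      have : cut e 2 = e * (Real.pi / 2) + Real.pi := by simp [cut]; ring
      rw [this, Real.sin_add_pi]
      rcases he with rfl | rfl <;> simp
    rcases lt_or_gt_of_ne k1 with m1 | m1
    · exact ⟨0, v1, m1⟩
    rcases lt_or_gt_of_ne k2 with m2 | m2
    · exact ⟨1, m1, m2⟩
    · exact ⟨2, m2, v2⟩
  · rintro ⟨i, x1, x2, x3, x4, -⟩
    exact ⟨(fun h => by rw [h, mul_zero] at x1; exact lt_irrefl _ x1), (fun h => by rw [h, mul_zero] at x2; exact lt_irrefl _ x2), (fun h => by rw [h, mul_zero] at x3; exact lt_irrefl _ x3), (fun h => by rw [h, mul_zero] at x4; exact lt_irrefl _ x4)⟩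

end

noncomputable section

def toMat (x : PP) : Matrix (Fin 5) (Fin 5) ℝ :=
  let g := x.1; let E := x.2.1; let K := x.2.2.1; let F := x.2.2.2.1
  let l := x.2.2.2.2.1; let D := x.2.2.2.2.2.1; let a := x.2.2.2.2.2.2.1
  let H := x.2.2.2.2.2.2.2
  !![1, 0, 0, 0, 0;
     a, 1, 0, 0, 0;
     (1 - l * D) / q1 K F l D, (H - l * (1 + D * H)) / q1 K F l D, 1, 0, 0;
     g * E * D, g * E * (1 + D * H), g * E * (F + D * K), 1, 0;
     g, g * H, g * K, l / E, 1]

/-- The coordinate `E`. -/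
def eE (L : Matrix (Fin 5) (Fin 5) ℝ) : ℝ :=
  (L 3 1 * L 4 0 - L 3 0 * L 4 1) / (L 4 0) ^ 2

def ofMat (L : Matrix (Fin 5) (Fin 5) ℝ) : PP :=
  (L 4 0, eE L, L 4 2 / L 4 0, (L 3 2 - L 3 0 * L 4 2 / L 4 0) / (L 4 0 * eE L),
    L 4 3 * eE L, L 3 0 / L 4 0 / eE L, L 1 0, L 4 1 / L 4 0)

lemma of_to {x : PP} (hx : x ∈ WW) : ofMat (toMat x) = x := by
  obtain ⟨g, E, K, F, l, D, a, H⟩ := x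
  obtain ⟨w1, w2, w3, w4⟩ := hx
  dsimp only at *
  have hE : eE (toMat (g, E, K, F, l, D, a, H)) = E := by
    simp [eE, toMat]; field_simp; ring
  unfold ofMat
  rw [hE]
  simp [toMat]
  refine ⟨?_, ?_, ?_, ?_, ?_⟩ <;> field_simp <;> try ring

lemma bru_facts {L : Matrix (Fin 5) (Fin 5) ℝ} (hL : L ∈ BL 5 σ43521) :
    L 4 0 ≠ 0 ∧ L 3 1 * L 4 0 - L 3 0 * L 4 1 ≠ 0 ∧
    L 1 0 * (L 3 1 * L 4 2 - L 3 2 * L 4 1) - (L 3 0 * L 4 2 - L 3 2 * L 4 0) ≠ 0 ∧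
    ∃ y, 1 = y * (L 4 2 - L 4 3 * L 3 2) ∧ L 2 0 = y * (L 4 0 - L 4 3 * L 3 0) ∧
      L 2 1 = y * (L 4 1 - L 4 3 * L 3 1) := by
  obtain ⟨⟨hdiag, hup⟩, U, ⟨hU, hUd⟩, V, ⟨hV, hVd⟩, h⟩ := hL
  rw [Matrix.det_of_isUpperTriangular (fun i j hij => hU i j hij), isUnit_iff_ne_zero,
    Finset.prod_ne_zero_iff] at hUd
  rw [Matrix.det_of_isUpperTriangular (fun i j hij => hV i j hij), isUnit_iff_ne_zero,
    Finset.prod_ne_zero_iff] at hVd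
  have hu := fun i => hUd i (Finset.mem_univ i)
  have hv := fun i => hVd i (Finset.mem_univ i)
  have hent : ∀ i j, L i j = U i 0 * V 3 j + U i 1 * V 2 j + U i 2 * V 4 j + U i 3 * V 1 j
      + U i 4 * V 0 j := by
    intro i j
    rw [h, Matrix.mul_apply]
    simp only [Matrix.mul_apply, Fin.sum_univ_five, permMat, σ43521]
    simp [Fin.ext_iff]
    ring
  have U10 := hU 1 0 (by decide)
  have U20 := hU 2 0 (by decide)
  have U21 := hU 2 1 (by decide)
  have U30 := hU 3 0 (by decide)
  have U31 := hU 3 1 (by decide)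
  have U32 := hU 3 2 (by decide)
  have U40 := hU 4 0 (by decide)
  have U41 := hU 4 1 (by decide)
  have U42 := hU 4 2 (by decide)
  have U43 := hU 4 3 (by decide)
  have V10 := hV 1 0 (by decide)
  have V20 := hV 2 0 (by decide)
  have V21 := hV 2 1 (by decide)
  have V30 := hV 3 0 (by decide)
  have V31 := hV 3 1 (by decide)
  have V32 := hV 3 2 (by decide)
  have V40 := hV 4 0 (by decide)
  have V41 := hV 4 1 (by decide)
  have V42 := hV 4 2 (by decide)
  have V43 := hV 4 3 (by decide)
  have r1 : ∀ j, L 1 j = U 1 1 * V 2 j + U 1 2 * V 4 j + U 1 3 * V 1 j + U 1 4 * V 0 j := by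
    intro j; rw [hent, U10]; ring
  have r2 : ∀ j, L 2 j = U 2 2 * V 4 j + U 2 3 * V 1 j + U 2 4 * V 0 j := by
    intro j; rw [hent, U20, U21]; ring
  have r3 : ∀ j, L 3 j = U 3 3 * V 1 j + U 3 4 * V 0 j := by
    intro j; rw [hent, U30, U31, U32]; ring
  have r4 : ∀ j, L 4 j = U 4 4 * V 0 j := by
    intro j; rw [hent, U40, U41, U42, U43]; ring
  have u1 := hu 1
  have u3 := hu 3
  have u4 := hu 4
  have v0 := hv 0
  have v1 := hv 1
  have v2 := hv 2
  refine ⟨?_, ?_, ?_, ?_⟩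
  · rw [r4]; exact mul_ne_zero u4 v0
  · have : L 3 1 * L 4 0 - L 3 0 * L 4 1 = U 3 3 * U 4 4 * V 0 0 * V 1 1 := by
      rw [r3, r3, r4, r4, V10]; ring
    rw [this]; simp [u3, u4, v0, v1]
  · have d1 : L 1 1 = 1 := hdiag 1
    have d2 : L 1 2 = 0 := hup 1 2 (by decide)
    have : L 1 0 * (L 3 1 * L 4 2 - L 3 2 * L 4 1) - (L 3 0 * L 4 2 - L 3 2 * L 4 0)
      = - (U 1 1 * U 3 3 * U 4 4 * V 0 0 * V 1 1 * V 2 2) := by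
      have : L 1 0 * (L 3 1 * L 4 2 - L 3 2 * L 4 1) - (L 3 0 * L 4 2 - L 3 2 * L 4 0)
       = L 1 0 * (L 3 1 * L 4 2 - L 3 2 * L 4 1) - L 1 1 * (L 3 0 * L 4 2 - L 3 2 * L 4 0)
         + L 1 2 * (L 3 0 * L 4 1 - L 3 1 * L 4 0) := by rw [d1, d2]; ring
      rw [this]
      simp only [r1, r3, r4, V10, V20, V21, V40, V41, V42]
      ring
    rw [this]; simp [u1, u3, u4, v0, v1, v2]
  · have e2 : L 2 2 = 1 := hdiag 2
    have e3 : L 2 3 = 0 := hup 2 3 (by decide)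
    have e4 : L 3 3 = 1 := hdiag 3
    obtain ⟨x, y, hxy⟩ : ∃ x y, ∀ j, V 4 j = 0 → L 2 j = x * L 3 j + y * L 4 j := by
      refine ⟨U 2 3 / U 3 3, (U 2 4 - U 2 3 / U 3 3 * U 3 4) / U 4 4, ?_⟩
      intro j hj
      rw [r2, r3, r4, hj]
      field_simp
      ring
    have a0 := hxy 0 V40
    have a1 := hxy 1 V41
    have a2 := hxy 2 V42
    have a3 := hxy 3 V43
    rw [e3, e4] at a3
    rw [e2] at a2
    have hx : x = -y * L 4 3 := by linarith
    subst hx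
    exact ⟨y, by linarith, by linarith, by linarith⟩

lemma of_mem {L : Matrix (Fin 5) (Fin 5) ℝ} (hL : L ∈ BL 5 σ43521) :
    ofMat L ∈ WW ∧ toMat (ofMat L) = L := by
  obtain ⟨hg, hE, h2, y, y1, y2, y3⟩ := bru_facts hL
  have hy : y ≠ 0 := by rintro rfl; simp at y1
  have hE0 : eE L ≠ 0 := div_ne_zero hE (pow_ne_zero 2 hg)
  have hq1 : L 4 0 * q1 (L 4 2 / L 4 0) ((L 3 2 - L 3 0 * L 4 2 / L 4 0) / (L 4 0 * eE L))
      (L 4 3 * eE L) (L 3 0 / L 4 0 / eE L) = L 4 2 - L 4 3 * L 3 2 := by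
    unfold q1; field_simp; ring
  have hq1' : q1 (L 4 2 / L 4 0) ((L 3 2 - L 3 0 * L 4 2 / L 4 0) / (L 4 0 * eE L))
      (L 4 3 * eE L) (L 3 0 / L 4 0 / eE L) = 1 / (y * L 4 0) := by
    rw [eq_div_iff (mul_ne_zero hy hg)]
    rw [← hq1] at y1
    linarith
  have hEe : eE L * L 4 0 ^ 2 = L 3 1 * L 4 0 - L 3 0 * L 4 1 := by
    unfold eE; field_simp
  have hq2 : L 4 0 ^ 2 * eE L * q2 (L 4 2 / L 4 0)
      ((L 3 2 - L 3 0 * L 4 2 / L 4 0) / (L 4 0 * eE L)) (L 1 0) (L 4 1 / L 4 0) =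
      L 1 0 * (L 3 1 * L 4 2 - L 3 2 * L 4 1) - (L 3 0 * L 4 2 - L 3 2 * L 4 0) := by
    unfold q2; field_simp
    linear_combination (L 1 0 * L 4 2) * hEe
  have a01 := hL.1.2 0 1 (by decide)
  have a02 := hL.1.2 0 2 (by decide)
  have a03 := hL.1.2 0 3 (by decide)
  have a04 := hL.1.2 0 4 (by decide)
  have a12 := hL.1.2 1 2 (by decide)
  have a13 := hL.1.2 1 3 (by decide)
  have a14 := hL.1.2 1 4 (by decide)
  have a23 := hL.1.2 2 3 (by decide)
  have a24 := hL.1.2 2 4 (by decide)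
  have a34 := hL.1.2 3 4 (by decide)
  have hd := hL.1.1
  refine ⟨⟨hg, hE0, ?_, ?_⟩, ?_⟩
  · dsimp only [ofMat]
    rw [hq1']; exact one_div_ne_zero (mul_ne_zero hy hg)
  · intro h
    dsimp only [ofMat] at h
    rw [h, mul_zero] at hq2
    exact h2 hq2.symm
  · have z20 : (1 - L 4 3 * eE L * (L 3 0 / L 4 0 / eE L)) / (1 / (y * L 4 0)) = L 2 0 := by
      rw [y2]; field_simp
    have z21 : (L 4 1 / L 4 0 - L 4 3 * eE L * (1 + L 3 0 / L 4 0 / eE L * (L 4 1 / L 4 0))) /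
        (1 / (y * L 4 0)) = L 2 1 := by
      rw [y3]; field_simp
      linear_combination (-L 4 3) * hEe
    have z30 : L 4 0 * eE L * (L 3 0 / L 4 0 / eE L) = L 3 0 := by field_simp
    have z31 : L 4 0 * eE L * (1 + L 3 0 / L 4 0 / eE L * (L 4 1 / L 4 0)) = L 3 1 := by
      field_simp
      linear_combination hEe
    have z32 : L 4 0 * eE L * ((L 3 2 - L 3 0 * L 4 2 / L 4 0) / (L 4 0 * eE L) +
        L 3 0 / L 4 0 / eE L * (L 4 2 / L 4 0)) = L 3 2 := by
      field_simp
      ring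
    have z41 : L 4 0 * (L 4 1 / L 4 0) = L 4 1 := by field_simp
    have z42 : L 4 0 * (L 4 2 / L 4 0) = L 4 2 := by field_simp
    have z43 : L 4 3 * eE L / eE L = L 4 3 := by field_simp
    unfold toMat ofMat
    dsimp only
    rw [hq1', z20, z21, z30, z31, z32, z41, z42, z43]
    ext i j
    fin_cases i <;> fin_cases j <;> simp [hd, a01, a02, a03, a04, a12, a13, a14, a23, a24, a34]

lemma to_mem {x : PP} (hx : x ∈ WW) : toMat x ∈ BL 5 σ43521 := by
  obtain ⟨g, E, K, F, l, D, a, H⟩ := x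
  obtain ⟨w1, w2, w3, w4⟩ := hx
  dsimp only at *
  have hq1 : q1 K F l D = K * (1 - l * D) - l * F := rfl
  have hq2 : q2 K F a H = a * K + F * (1 - a * H) := rfl
  unfold toMat
  dsimp only
  generalize q1 K F l D = Q1 at *
  generalize q2 K F a H = Q2 at *
  refine ⟨⟨?_, ?_⟩, ?_⟩
  · intro i; fin_cases i <;> simp
  · intro i j hij; fin_cases i <;> fin_cases j <;> first | (exfalso; revert hij; decide) | simp
  · refine ⟨!![1, (K - H * F) / Q2, 0, -H / (g * E), 1 / g;
        0, 1, 0, (1 - a * H) / (g * E), a / g;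
        0, 0, 1, -l / E / (g * Q1), 1 / (g * Q1) - l / E / (g * Q1) * (E * D);
        0, 0, 0, 1, E * D;
        0, 0, 0, 0, 1], ⟨?_, ?_⟩,
      !![g, g * H, g * K, l / E, 1;
        0, g * E, g * E * F, 1 - l * D, -(E * D);
        0, 0, -Q2, -(a * l / (g * E)) - (1 - a * H) * (1 - l * D) / (g * E),
          -(a / g) + (1 - a * H) * D / g;
        0, 0, 0, Q1 / (g * E * Q2),
          -((K - H * F) / Q2 * (-(a / g) + (1 - a * H) * D / g) + H * D / g + 1 / g);
        0, 0, 0, 0, -(1 / (g * Q1))], ⟨?_, ?_⟩, ?_⟩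
    · intro i j hij; fin_cases i <;> fin_cases j <;> first | (exfalso; revert hij; decide) | simp
    · rw [Matrix.det_of_isUpperTriangular]
      · simp [Fin.prod_univ_five]
      · intro i j hij
        replace hij : j < i := hij
        fin_cases i <;> fin_cases j <;> first | (exfalso; revert hij; decide) | simp
    · intro i j hij; fin_cases i <;> fin_cases j <;> first | (exfalso; revert hij; decide) | simp
    · rw [Matrix.det_of_isUpperTriangular]
      · simp [Fin.prod_univ_five, w1, w2, w3, w4]
      · intro i j hij
        replace hij : j < i := hij
        fin_cases i <;> fin_cases j <;> first | (exfalso; revert hij; decide) | simp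
    · ext i j
      rw [Matrix.mul_apply]
      simp only [Matrix.mul_apply, Fin.sum_univ_five, permMat, σ43521]
      fin_cases i <;> fin_cases j <;> simp [Fin.ext_iff] <;> (try field_simp) <;> (try simp only [hq1, hq2]) <;> (try ring)

lemma toMat_cont : ContinuousOn toMat WW := by
  unfold toMat
  refine continuousOn_pi.2 fun i => continuousOn_pi.2 fun j => ?_
  have h : ∀ x ∈ WW, q1 x.2.2.1 x.2.2.2.1 x.2.2.2.2.1 x.2.2.2.2.2.1 ≠ 0 := fun x hx => hx.2.2.1
  have h' : ∀ x ∈ WW, x.2.1 ≠ 0 := fun x hx => hx.2.1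
  have hc : ContinuousOn (fun x : PP => q1 x.2.2.1 x.2.2.2.1 x.2.2.2.2.1 x.2.2.2.2.2.1) WW := by
    unfold q1; fun_prop
  fin_cases i <;> fin_cases j <;> simp <;> fun_prop (disch := assumption)

lemma ofMat_cont : ContinuousOn ofMat (BL 5 σ43521) := by
  have h : ∀ L ∈ BL 5 σ43521, L 4 0 ≠ 0 := fun L hL => (of_mem hL).1.1
  have h' : ∀ L ∈ BL 5 σ43521, eE L ≠ 0 := fun L hL => (of_mem hL).1.2.1
  have h'' : ∀ L ∈ BL 5 σ43521, L 4 0 * eE L ≠ 0 := fun L hL => mul_ne_zero (h L hL) (h' L hL)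
  have h2 : ∀ L ∈ BL 5 σ43521, L 4 0 ^ 2 ≠ 0 := fun L hL => pow_ne_zero 2 (h L hL)
  have he : ∀ i j, ContinuousOn (fun L : Matrix (Fin 5) (Fin 5) ℝ => L i j) (BL 5 σ43521) :=
    fun i j => (continuous_id.matrix_elem i j).continuousOn
  have e1 := he 1 0
  have e2 := he 3 0
  have e3 := he 3 1
  have e4 := he 3 2
  have e5 := he 4 0
  have e6 := he 4 1
  have e7 := he 4 2
  have e8 := he 4 3
  have hc : ContinuousOn eE (BL 5 σ43521) := by
    unfold eE
    fun_prop (disch := assumption)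
  unfold ofMat
  fun_prop (disch := assumption)

def homeo : BL 5 σ43521 ≃ₜ WW where
  toFun L := ⟨ofMat L.1, (of_mem L.2).1⟩
  invFun x := ⟨toMat x.1, to_mem x.2⟩
  left_inv L := Subtype.ext (of_mem L.2).2
  right_inv x := Subtype.ext (of_to x.2)
  continuous_toFun := (ofMat_cont.domRestrict).subtype_mk _
  continuous_invFun := (toMat_cont.domRestrict).subtype_mk _

end

/-- `BL_{[43521]} ⊂ Lo¹₅` has exactly 48 connected components,
all of which are contractible. -/
theorem stmt6 :
    Nat.card (ConnectedComponents ↥(BL 5 σ43521)) = 48 ∧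
      ∀ L : ↥(BL 5 σ43521), ContractibleSpace ↥(connectedComponent L) := by
  have h := main_top (X := BL 5 σ43521) (Y := PP) (I := II) (fun L => (homeo L).1)
    (Topology.IsEmbedding.subtypeVal.comp homeo.isEmbedding) SI (fun i => SS_open _ _ _ _ _ _) ?_
    SI_disj SI_contr
  · refine ⟨h.1.trans ?_, h.2⟩
    simp
  · rw [← SI_cover]
    ext x
    constructor
    · rintro ⟨L, rfl⟩; exact (homeo L).2
    · intro hx; exact ⟨homeo.symm ⟨x, hx⟩, by simp⟩
end
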